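/- arXiv:2206.15368 — 6 statements merged into one kernel-verified Lean document; each statement's English description precedes it below -/
import Mathlib

section
/- There exists a constant K_d > 0 depending only on the dimension d such that the following holds: for every countable family {u_n}_{n≥1} of continuously differentiable functions from ℝ^d to ℂ that is orthonormal in L²(ℝ^d), and every sequence of coefficients λ_n with 0 ≤ λ_n ≤ 1 for all n, one has Σ_n λ_n ∫_{ℝ^d} |∇u_n(x)|² dx ≥ K_d ∫_{ℝ^d} ρ(x)^{1+2/d} dx, where ρ(x) = Σ_n λ_n |u_n(x)|². -/
open MeasureTheory ENNReal
open scoped BigOperators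

/-- `|∇f(x)|² = Σᵢ |∂ᵢ f(x)|²` for a function `f : ℝ^d → ℂ`. -/
noncomputable def gradSq {d : ℕ} (f : EuclideanSpace ℝ (Fin d) → ℂ)
    (x : EuclideanSpace ℝ (Fin d)) : ℝ :=
  ∑ i : Fin d, ‖fderiv ℝ f x (EuclideanSpace.single i 1)‖ ^ 2

/-- Unnormalised average of `f` over the ball `B(x,r)`. -/
noncomputable def ltA {d : ℕ} (f : EuclideanSpace ℝ (Fin d) → ℝ≥0∞)
    (x : EuclideanSpace ℝ (Fin d)) (r : ℝ) : ℝ≥0∞ :=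
  ∫⁻ y in Metric.ball (0 : EuclideanSpace ℝ (Fin d)) 1, f (x + r • y)

/-- Hardy-Littlewood maximal function (unnormalised). -/
noncomputable def ltM {d : ℕ} (f : EuclideanSpace ℝ (Fin d) → ℝ≥0∞)
    (x : EuclideanSpace ℝ (Fin d)) : ℝ≥0∞ :=
  ⨆ (r : ℝ) (_ : 0 < r), ltA f x r

lemma lt_change {d : ℕ} (f : EuclideanSpace ℝ (Fin d) → ℝ≥0∞) (hf : Measurable f)
    (x : EuclideanSpace ℝ (Fin d)) {r : ℝ} (hr : 0 < r) :
    ∫⁻ y in Metric.ball x r, f y = ENNReal.ofReal (r ^ d) * ltA f x r := by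
  have h1 : ∫⁻ y in Metric.ball x r, f y
      = ∫⁻ y, (Metric.ball x r).indicator f (x + y) := by
    rw [lintegral_add_left_eq_self (μ := volume) ((Metric.ball x r).indicator f) x,
      lintegral_indicator measurableSet_ball]
  have hm : Measurable (fun y => (Metric.ball x r).indicator f (x + y)) :=
    (hf.indicator measurableSet_ball).comp (measurable_const_add x)
  have h2 : ltA f x r = ∫⁻ y, (Metric.ball x r).indicator f (x + r • y) := by
    unfold ltA
    rw [← lintegral_indicator measurableSet_ball]
    congr 1
    ext y
    have : y ∈ Metric.ball (0 : EuclideanSpace ℝ (Fin d)) 1 ↔ x + r • y ∈ Metric.ball x r := by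
      simp [norm_smul, abs_of_pos hr, hr]
    by_cases h : y ∈ Metric.ball (0 : EuclideanSpace ℝ (Fin d)) 1
    · rw [Set.indicator_of_mem h, Set.indicator_of_mem (this.1 h)]
    · rw [Set.indicator_of_notMem h, Set.indicator_of_notMem (fun hh => h (this.2 hh))]
  have h3 := Measure.map_addHaar_smul (volume : Measure (EuclideanSpace ℝ (Fin d))) hr.ne'
  have h4 : ltA f x r = ENNReal.ofReal |(r ^ d)⁻¹| *
      ∫⁻ y, (Metric.ball x r).indicator f (x + y) := by
    rw [h2, ← lintegral_map (g := fun y : EuclideanSpace ℝ (Fin d) => r • y) hm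
      (measurable_const_smul r), h3, lintegral_smul_measure]
    simp
  rw [h4, ← mul_assoc, ← ENNReal.ofReal_mul (by positivity), abs_of_pos (by positivity),
    mul_inv_cancel₀ (by positivity), ENNReal.ofReal_one, one_mul, h1]

lemma lt_lt_A {d : ℕ} (f : EuclideanSpace ℝ (Fin d) → ℝ≥0∞) (hf : Measurable f)
    (x : EuclideanSpace ℝ (Fin d)) {r : ℝ} (hr : 0 < r) (t : ℝ≥0∞) :
    t < ltA f x r ↔ ENNReal.ofReal (r ^ d) * t < ∫⁻ y in Metric.ball x r, f y := by
  rw [lt_change f hf x hr]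
  exact (ENNReal.mul_lt_mul_iff_right (by positivity) ENNReal.ofReal_ne_top).symm

lemma lt_isOpen {d : ℕ} (f : EuclideanSpace ℝ (Fin d) → ℝ≥0∞) (r : ℝ) (a : ℝ≥0∞) :
    IsOpen {x | a < ∫⁻ y in Metric.ball x r, f y} := by
  rw [Metric.isOpen_iff]
  intro x hx
  have hU : Metric.ball x r = ⋃ n : ℕ, Metric.ball x (r - 1 / ((n : ℝ) + 1)) := by
    ext y
    simp only [Metric.mem_ball, Set.mem_iUnion]
    constructor
    · intro h
      obtain ⟨n, hn⟩ := exists_nat_one_div_lt (sub_pos.2 h)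
      exact ⟨n, by linarith⟩
    · rintro ⟨n, hn⟩
      have : 0 < 1 / ((n : ℝ) + 1) := by positivity
      linarith
  have hdir : Directed (· ⊆ ·) fun n : ℕ => Metric.ball x (r - 1 / ((n : ℝ) + 1)) := by
    apply Monotone.directed_le
    intro m n h
    apply Metric.ball_subset_ball
    have := Nat.one_div_le_one_div (α := ℝ) h
    linarith
  rw [Set.mem_ofPred_eq, hU, setLIntegral_iUnion_of_directed _ hdir, lt_iSup_iff] at hx
  obtain ⟨n, hn⟩ := hx
  refine ⟨1 / ((n : ℝ) + 1), by positivity, fun z hz => ?_⟩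
  refine lt_of_lt_of_le hn (lintegral_mono_set ?_)
  apply Metric.ball_subset_ball'
  rw [Metric.mem_ball, dist_comm] at hz
  linarith

lemma ltM_lt {d : ℕ} (f : EuclideanSpace ℝ (Fin d) → ℝ≥0∞) (hf : Measurable f) (t : ℝ≥0∞) :
    {x | t < ltM f x} = ⋃ (r : ℝ) (_ : 0 < r),
      {x | ENNReal.ofReal (r ^ d) * t < ∫⁻ y in Metric.ball x r, f y} := by
  ext x
  simp only [ltM, Set.mem_ofPred_eq, lt_iSup_iff, Set.mem_iUnion]
  constructor
  · rintro ⟨r, hr, h⟩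
    exact ⟨r, hr, (lt_lt_A f hf x hr t).1 h⟩
  · rintro ⟨r, hr, h⟩
    exact ⟨r, hr, (lt_lt_A f hf x hr t).2 h⟩

lemma ltM_measurable {d : ℕ} (f : EuclideanSpace ℝ (Fin d) → ℝ≥0∞) (hf : Measurable f) :
    Measurable (ltM f) := by
  refine measurable_of_Ioi fun t => ?_
  have : ltM f ⁻¹' Set.Ioi t = {x | t < ltM f x} := rfl
  rw [this, ltM_lt f hf]
  exact (isOpen_iUnion fun r => isOpen_iUnion fun _ => lt_isOpen f r _).measurableSet

/-- The volume of the unit ball. -/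
noncomputable def ltV (d : ℕ) : ℝ≥0∞ := volume (Metric.ball (0 : EuclideanSpace ℝ (Fin d)) 1)

lemma ltV_ne_top (d : ℕ) : ltV d ≠ ∞ := measure_ball_lt_top.ne
lemma ltV_ne_zero (d : ℕ) : ltV d ≠ 0 := (Metric.measure_ball_pos _ _ one_pos).ne'

lemma lt_weak_R {d : ℕ} (f : EuclideanSpace ℝ (Fin d) → ℝ≥0∞) (t : ℝ≥0∞) (R : ℝ) :
    t * volume {x | ∃ r : ℝ, 0 < r ∧ r ≤ R ∧
      ENNReal.ofReal (r ^ d) * t < ∫⁻ y in Metric.ball x r, f y}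
      ≤ ENNReal.ofReal (5 ^ d) * ltV d * ∫⁻ y, f y := by
  set S := {x | ∃ r : ℝ, 0 < r ∧ r ≤ R ∧
      ENNReal.ofReal (r ^ d) * t < ∫⁻ y in Metric.ball x r, f y} with hS
  have hch : ∀ x : EuclideanSpace ℝ (Fin d), ∃ r : ℝ, x ∈ S → (0 < r ∧ r ≤ R ∧
      ENNReal.ofReal (r ^ d) * t < ∫⁻ y in Metric.ball x r, f y) := by
    intro x
    by_cases hx : x ∈ S
    · obtain ⟨r, hr⟩ := hx
      exact ⟨r, fun _ => hr⟩
    · exact ⟨0, fun h => absurd h hx⟩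
  choose r hr using hch
  obtain ⟨u, huS, hdisj, hcov⟩ := Vitali.exists_disjoint_subfamily_covering_enlargement_closedBall
    S (fun x => x) r R (fun a ha => (hr a ha).2.1) 5 (by norm_num)
  have hdisj' : u.PairwiseDisjoint fun a => Metric.ball a (r a) := by
    intro a ha b hb hab
    exact (hdisj ha hb hab).mono Metric.ball_subset_closedBall Metric.ball_subset_closedBall
  have hcount : u.Countable := by
    apply Set.PairwiseDisjoint.countable_of_isOpen hdisj'
    · intro a _; exact Metric.isOpen_ball
    · intro a ha
      exact ⟨a, Metric.mem_ball_self (hr a (huS ha)).1⟩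
  have hsub : S ⊆ ⋃ b ∈ u, Metric.closedBall b (5 * r b) := by
    intro x hx
    obtain ⟨b, hb, h⟩ := hcov x hx
    exact Set.mem_biUnion hb (h (Metric.mem_closedBall_self (hr x hx).1.le))
  have := hcount.to_subtype
  calc t * volume S ≤ t * ∑' b : u, volume (Metric.closedBall (b : EuclideanSpace ℝ (Fin d)) (5 * r b)) := by
        gcongr
        exact (measure_mono hsub).trans (measure_biUnion_le _ hcount _)
    _ = ∑' b : u, t * volume (Metric.closedBall (b : EuclideanSpace ℝ (Fin d)) (5 * r b)) :=
        ENNReal.tsum_mul_left.symm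
    _ ≤ ∑' b : u, ENNReal.ofReal (5 ^ d) * ltV d * ∫⁻ y in Metric.ball (b : EuclideanSpace ℝ (Fin d)) (r b), f y := by
        refine ENNReal.tsum_le_tsum fun b => ?_
        obtain ⟨h0, -, h⟩ := hr b (huS b.2)
        rw [Measure.addHaar_closedBall _ _ (by positivity), finrank_euclideanSpace_fin, mul_pow,
          ENNReal.ofReal_mul (by positivity)]
        calc _ = ENNReal.ofReal (5 ^ d) * ltV d * (ENNReal.ofReal (r b ^ d) * t) := by
              unfold ltV; ring
          _ ≤ _ := by gcongr
    _ = ENNReal.ofReal (5 ^ d) * ltV d * ∑' b : u, ∫⁻ y in Metric.ball (b : EuclideanSpace ℝ (Fin d)) (r b), f y :=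
        ENNReal.tsum_mul_left
    _ ≤ _ := by
        gcongr
        rw [← lintegral_biUnion hcount (fun _ _ => measurableSet_ball) hdisj']
        exact setLIntegral_le_lintegral _ _

lemma lt_weak {d : ℕ} (f : EuclideanSpace ℝ (Fin d) → ℝ≥0∞) (hf : Measurable f) (t : ℝ≥0∞) :
    t * volume {x | t < ltM f x} ≤ ENNReal.ofReal (5 ^ d) * ltV d * ∫⁻ y, f y := by
  have : {x | t < ltM f x} = ⋃ n : ℕ, {x | ∃ r : ℝ, 0 < r ∧ r ≤ n ∧
      ENNReal.ofReal (r ^ d) * t < ∫⁻ y in Metric.ball x r, f y} := by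
    rw [ltM_lt f hf]
    ext x
    simp only [Set.mem_iUnion, Set.mem_ofPred_eq]
    constructor
    · rintro ⟨r, hr, h⟩
      obtain ⟨n, hn⟩ := exists_nat_ge r
      exact ⟨n, r, hr, hn, h⟩
    · rintro ⟨n, r, hr, hn, h⟩
      exact ⟨r, hr, h⟩
  rw [this, Monotone.measure_iUnion, ENNReal.mul_iSup]
  · exact iSup_le fun n => lt_weak_R f t n
  · rintro m n h x ⟨r, h0, h1, h2⟩
    exact ⟨r, h0, h1.trans (by exact_mod_cast h), h2⟩

lemma lt_weak2 {d : ℕ} (f : EuclideanSpace ℝ (Fin d) → ℝ≥0∞) (hf : Measurable f) (t : ℝ≥0∞)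
    (ht : t ≠ ∞) :
    t * volume {x | t < ltM f x} ≤
      2 * (ENNReal.ofReal (5 ^ d) * ltV d) * ∫⁻ y, {y | t < 2 * ltV d * f y}.indicator f y := by
  have hms : MeasurableSet {y | t < 2 * ltV d * f y} :=
    measurableSet_lt measurable_const (hf.const_mul _)
  set g := {y | t < 2 * ltV d * f y}.indicator f with hg
  have hgm : Measurable g := hf.indicator hms
  have hsub : {x | t < ltM f x} ⊆ {x | t / 2 < ltM g x} := by
    intro x hx
    simp only [ltM, Set.mem_ofPred_eq, lt_iSup_iff] at hx ⊢
    obtain ⟨r, hr, h⟩ := hx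
    refine ⟨r, hr, ?_⟩
    have hle : ltA f x r ≤ ltA g x r + t / 2 := by
      have : ltA f x r ≤ ∫⁻ y in Metric.ball (0 : EuclideanSpace ℝ (Fin d)) 1,
          (g (x + r • y) + t / 2 / ltV d) := by
        refine lintegral_mono fun y => ?_
        by_cases hy : t < 2 * ltV d * f (x + r • y)
        · have : g (x + r • y) = f (x + r • y) := Set.indicator_of_mem (by exact hy) _
          rw [this]; exact le_self_add
        · refine le_add_left ?_
          rw [ENNReal.le_div_iff_mul_le (Or.inl (ltV_ne_zero d)) (Or.inl (ltV_ne_top d)),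
            ENNReal.le_div_iff_mul_le (Or.inl two_ne_zero) (Or.inl (by simp))]
          calc _ = 2 * ltV d * f (x + r • y) := by ring
            _ ≤ t := not_lt.1 hy
      refine this.trans_eq ?_
      rw [lintegral_add_right _ measurable_const, setLIntegral_const]
      congr 1
      exact ENNReal.div_mul_cancel (ltV_ne_zero d) (ltV_ne_top d)
    by_contra hcon
    have := hle.trans (add_le_add (not_lt.1 hcon) le_rfl)
    rw [ENNReal.add_halves] at this
    exact absurd h (not_lt.2 this)
  calc t * volume {x | t < ltM f x} ≤ t * volume {x | t / 2 < ltM g x} := by gcongr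
    _ = 2 * (t / 2 * volume {x | t / 2 < ltM g x}) := by
        rw [← mul_assoc, ENNReal.mul_div_cancel two_ne_zero (by simp)]
    _ ≤ 2 * (ENNReal.ofReal (5 ^ d) * ltV d * ∫⁻ y, g y) := by
        gcongr 2 * ?_
        exact lt_weak g hgm _
    _ = _ := by ring

lemma lt_sq_fin (a : ℝ) (ha : 0 ≤ a) :
    ENNReal.ofReal a ^ 2 ≤ ∫⁻ t in Set.Ioi (0 : ℝ), 2 * ENNReal.ofReal t *
      (if ENNReal.ofReal t < ENNReal.ofReal a then 1 else 0) := by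
  have h1 : ∫⁻ t in Set.Ioo (0 : ℝ) a, ENNReal.ofReal (2 * t) = ENNReal.ofReal (a ^ 2) := by
    rw [Measure.restrict_congr_set Ioo_ae_eq_Ioc, ← ofReal_integral_eq_lintegral_ofReal]
    · rw [← intervalIntegral.integral_of_le ha]
      rw [intervalIntegral.integral_const_mul, integral_id]
      congr 1
      ring
    · exact (intervalIntegrable_iff_integrableOn_Ioc_of_le ha).1
        (Continuous.intervalIntegrable (by fun_prop) _ _)
    · filter_upwards [ae_restrict_mem measurableSet_Ioc] with t ht
      have := ht.1
      simp only [Pi.zero_apply]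
      positivity
  rw [← ENNReal.ofReal_pow ha, ← h1]
  calc _ ≤ ∫⁻ t in Set.Ioo (0 : ℝ) a, 2 * ENNReal.ofReal t *
      (if ENNReal.ofReal t < ENNReal.ofReal a then 1 else 0) := by
        refine setLIntegral_mono' measurableSet_Ioo fun t ht => ?_
        rw [if_pos ((ENNReal.ofReal_lt_ofReal_iff (ht.1.trans ht.2)).2 ht.2), mul_one,
          ENNReal.ofReal_mul (by norm_num)]
        simp
    _ ≤ _ := lintegral_mono_set Set.Ioo_subset_Ioi_self

lemma lt_sq_le (a : ℝ≥0∞) :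
    a ^ 2 ≤ ∫⁻ t in Set.Ioi (0 : ℝ), 2 * ENNReal.ofReal t *
      (if ENNReal.ofReal t < a then 1 else 0) := by
  by_cases ha : a = ∞
  · subst ha
    have key : ∀ n : ℕ, (n : ℝ≥0∞) ≤ ∫⁻ t in Set.Ioi (0 : ℝ), 2 * ENNReal.ofReal t *
        (if ENNReal.ofReal t < ∞ then 1 else 0) := by
      intro n
      calc (n : ℝ≥0∞) ≤ ENNReal.ofReal (n : ℝ) ^ 2 := by
            rw [ENNReal.ofReal_natCast]
            exact_mod_cast Nat.le_self_pow two_ne_zero n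
        _ ≤ _ := lt_sq_fin n (Nat.cast_nonneg n)
        _ ≤ _ := by
            refine lintegral_mono fun t => ?_
            dsimp only
            gcongr
            rw [if_pos ENNReal.ofReal_lt_top]
            split_ifs <;> simp
    rw [ENNReal.eq_top_of_forall_nnreal_le (x := ∫⁻ t in Set.Ioi (0 : ℝ), 2 * ENNReal.ofReal t *
        (if ENNReal.ofReal t < ∞ then 1 else 0))]
    · exact le_top
    · intro r
      obtain ⟨n, hn⟩ := exists_nat_ge r
      exact le_trans (by exact_mod_cast hn) (key n)
  · have := lt_sq_fin a.toReal ENNReal.toReal_nonneg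
    rwa [ENNReal.ofReal_toReal ha] at this

lemma lt_lin (a : ℝ≥0∞) :
    ∫⁻ t in Set.Ioi (0 : ℝ), (if ENNReal.ofReal t < a then (1 : ℝ≥0∞) else 0) ≤ a := by
  by_cases ha : a = ∞
  · rw [ha]; exact le_top
  have hm : MeasurableSet {t : ℝ | ENNReal.ofReal t < a} :=
    measurableSet_lt (by fun_prop) measurable_const
  have : ∫⁻ t in Set.Ioi (0 : ℝ), (if ENNReal.ofReal t < a then (1 : ℝ≥0∞) else 0)
      = (volume.restrict (Set.Ioi (0 : ℝ))) {t : ℝ | ENNReal.ofReal t < a} := by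
    rw [← lintegral_indicator_one hm]
    simp [Set.indicator_apply]
  rw [this, Measure.restrict_apply hm]
  calc _ ≤ volume (Set.Ioo (0 : ℝ) a.toReal) := by
        apply measure_mono
        rintro t ⟨h1, h2⟩
        exact ⟨h2, (ENNReal.ofReal_lt_iff_lt_toReal (le_of_lt h2) ha).1 h1⟩
    _ = a := by
        rw [Real.volume_Ioo, sub_zero, ENNReal.ofReal_toReal ha]

lemma lt_maximal {d : ℕ} (f : EuclideanSpace ℝ (Fin d) → ℝ≥0∞) (hf : Measurable f) :
    ∫⁻ x, ltM f x ^ 2 ≤ 8 * (ENNReal.ofReal (5 ^ d) * ltV d) * ltV d * ∫⁻ x, f x ^ 2 := by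
  set C := ENNReal.ofReal (5 ^ d) * ltV d with hC
  have hM := ltM_measurable f hf
  calc ∫⁻ x, ltM f x ^ 2
      ≤ ∫⁻ x, ∫⁻ t in Set.Ioi (0 : ℝ), 2 * ENNReal.ofReal t *
          (if ENNReal.ofReal t < ltM f x then 1 else 0) :=
        lintegral_mono fun x => lt_sq_le _
    _ = ∫⁻ t in Set.Ioi (0 : ℝ), ∫⁻ x, 2 * ENNReal.ofReal t *
          (if ENNReal.ofReal t < ltM f x then 1 else 0) := by
        apply lintegral_lintegral_swap
        apply Measurable.aemeasurable
        apply Measurable.mul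
        · fun_prop
        · apply Measurable.ite _ measurable_const measurable_const
          exact measurableSet_lt (by fun_prop) (by exact hM.comp measurable_fst)
    _ ≤ ∫⁻ t in Set.Ioi (0 : ℝ), ∫⁻ x, 4 * C * (f x *
          (if ENNReal.ofReal t < 2 * ltV d * f x then 1 else 0)) := by
        refine lintegral_mono fun t => ?_
        dsimp only
        rw [lintegral_const_mul', lintegral_const_mul']
        · have h := lt_weak2 f hf (ENNReal.ofReal t) ENNReal.ofReal_ne_top
          have e1 : ∫⁻ x, (if ENNReal.ofReal t < ltM f x then (1 : ℝ≥0∞) else 0)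
              = volume {x | ENNReal.ofReal t < ltM f x} := by
            rw [← lintegral_indicator_one (measurableSet_lt measurable_const hM)]
            simp [Set.indicator_apply]
          have e2 : ∫⁻ x, f x * (if ENNReal.ofReal t < 2 * ltV d * f x then 1 else 0)
              = ∫⁻ y, {y | ENNReal.ofReal t < 2 * ltV d * f y}.indicator f y := by
            congr 1
            ext x
            simp [Set.indicator_apply]
          rw [e1, e2, mul_assoc]
          calc _ ≤ 2 * (2 * C * ∫⁻ y, {y | ENNReal.ofReal t < 2 * ltV d * f y}.indicator f y) := by
                gcongr
            _ = _ := by ring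
        · exact ENNReal.mul_ne_top (by simp) (ENNReal.mul_ne_top ENNReal.ofReal_ne_top (ltV_ne_top d))
        · exact ENNReal.mul_ne_top (by simp) ENNReal.ofReal_ne_top
    _ = ∫⁻ x, ∫⁻ t in Set.Ioi (0 : ℝ), 4 * C * (f x *
          (if ENNReal.ofReal t < 2 * ltV d * f x then 1 else 0)) := by
        symm
        apply lintegral_lintegral_swap
        apply Measurable.aemeasurable
        apply Measurable.const_mul
        apply Measurable.mul
        · exact hf.comp measurable_fst
        · apply Measurable.ite _ measurable_const measurable_const
          exact measurableSet_lt (by fun_prop) (by exact (hf.comp measurable_fst).const_mul _)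
    _ ≤ ∫⁻ x, 8 * C * ltV d * f x ^ 2 := by
        refine lintegral_mono fun x => ?_
        simp_rw [← mul_assoc]
        rw [lintegral_const_mul]
        · calc _ ≤ 4 * C * f x * (2 * ltV d * f x) := by
                gcongr
                exact lt_lin _
            _ = _ := by ring
        · apply Measurable.ite _ measurable_const measurable_const
          exact measurableSet_lt (by fun_prop) measurable_const
    _ = _ := lintegral_const_mul _ (hf.pow_const 2)

lemma lt_grad_line {d : ℕ} (u : EuclideanSpace ℝ (Fin d) → ℂ) (hu : ContDiff ℝ 1 u)
    (x y : EuclideanSpace ℝ (Fin d)) (hy : ‖y‖ ≤ 1) {r : ℝ} (hr : 0 < r) :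
    ‖u (x + r • y) - u x‖ₑ ≤
      ∫⁻ t in Set.Icc (0 : ℝ) 1, ENNReal.ofReal r * ‖fderiv ℝ u (x + (t * r) • y)‖ₑ := by
  have hc : ContDiff ℝ 1 (fun t : ℝ => u (x + (t * r) • y)) := by fun_prop
  have h := enorm_sub_le_lintegral_deriv_of_contDiffOn_Icc (a := (0 : ℝ)) (b := 1)
    hc.contDiffOn zero_le_one
  simp only [one_mul, zero_mul, zero_smul, add_zero] at h
  refine h.trans (lintegral_mono fun t => ?_)
  have hd : HasDerivAt (fun t : ℝ => u (x + (t * r) • y))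
      (fderiv ℝ u (x + (t * r) • y) (r • y)) t := by
    have h1 : HasDerivAt (fun t : ℝ => x + (t * r) • y) (r • y) t := by
      have := (((hasDerivAt_id t).mul_const r).smul_const y).const_add x
      simpa using this
    exact ((hu.differentiable one_ne_zero).differentiableAt.hasFDerivAt).comp_hasDerivAt t h1
  dsimp only
  rw [hd.deriv, ← ofReal_norm, ← ofReal_norm, ← ENNReal.ofReal_mul hr.le]
  apply ENNReal.ofReal_le_ofReal
  refine (ContinuousLinearMap.le_opNorm _ _).trans ?_
  rw [norm_smul, Real.norm_of_nonneg hr.le]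
  calc _ = ‖fderiv ℝ u (x + (t * r) • y)‖ * r * ‖y‖ := by ring
    _ ≤ ‖fderiv ℝ u (x + (t * r) • y)‖ * r * 1 := by gcongr
    _ = _ := by ring

lemma lt_poincare {d : ℕ} (u : EuclideanSpace ℝ (Fin d) → ℂ) (hu : ContDiff ℝ 1 u)
    (x : EuclideanSpace ℝ (Fin d)) {r : ℝ} (hr : 0 < r) :
    ltA (fun z => ‖u z - u x‖ₑ) x r ≤
      ENNReal.ofReal r * ltM (fun z => ‖fderiv ℝ u z‖ₑ) x := by
  have hcf : Continuous (fderiv ℝ u) := hu.continuous_fderiv one_ne_zero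
  unfold ltA
  calc ∫⁻ y in Metric.ball (0 : EuclideanSpace ℝ (Fin d)) 1, ‖u (x + r • y) - u x‖ₑ
      ≤ ∫⁻ y in Metric.ball (0 : EuclideanSpace ℝ (Fin d)) 1, ∫⁻ t in Set.Icc (0 : ℝ) 1,
          ENNReal.ofReal r * ‖fderiv ℝ u (x + (t * r) • y)‖ₑ := by
        refine setLIntegral_mono' measurableSet_ball fun y hy => ?_
        exact lt_grad_line u hu x y (by simpa using (mem_ball_zero_iff.1 hy).le) hr
    _ = ∫⁻ t in Set.Icc (0 : ℝ) 1, ∫⁻ y in Metric.ball (0 : EuclideanSpace ℝ (Fin d)) 1,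
          ENNReal.ofReal r * ‖fderiv ℝ u (x + (t * r) • y)‖ₑ := by
        apply lintegral_lintegral_swap
        apply Measurable.aemeasurable
        apply Measurable.const_mul
        have : Continuous (fun p : EuclideanSpace ℝ (Fin d) × ℝ =>
          ‖fderiv ℝ u (x + (p.2 * r) • p.1)‖ₑ) := by fun_prop
        exact this.measurable
    _ = ∫⁻ t in Set.Ioc (0 : ℝ) 1, ∫⁻ y in Metric.ball (0 : EuclideanSpace ℝ (Fin d)) 1,
          ENNReal.ofReal r * ‖fderiv ℝ u (x + (t * r) • y)‖ₑ := by
        rw [Measure.restrict_congr_set Ioc_ae_eq_Icc]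
    _ ≤ ∫⁻ t in Set.Ioc (0 : ℝ) 1, ENNReal.ofReal r * ltM (fun z => ‖fderiv ℝ u z‖ₑ) x := by
        refine setLIntegral_mono' measurableSet_Ioc fun t ht => ?_
        rw [lintegral_const_mul' _ _ ENNReal.ofReal_ne_top]
        gcongr
        exact le_iSup₂_of_le (f := fun (r : ℝ) (_ : 0 < r) => ltA (fun z => ‖fderiv ℝ u z‖ₑ) x r)
          (t * r) (mul_pos ht.1 hr) le_rfl
    _ = _ := by simp

lemma lt_memLp {d : ℕ} (f : EuclideanSpace ℝ (Fin d) → ℂ) (hf : Continuous f)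
    (h : ∫ x, f x * (starRingEnd ℂ) (f x) = 1) : MemLp f 2 volume := by
  rw [memLp_two_iff_integrable_sq_norm hf.aestronglyMeasurable]
  have h1 : Integrable (fun x => f x * (starRingEnd ℂ) (f x)) := by
    by_contra hcon
    rw [integral_undef hcon] at h
    exact zero_ne_one h
  refine h1.norm.congr (Filter.Eventually.of_forall fun x => ?_)
  simp [pow_two]

lemma lt_bessel {d : ℕ} (u : ℕ → EuclideanSpace ℝ (Fin d) → ℂ) (hu : ∀ n, Continuous (u n))
    (ho : ∀ m n : ℕ, ∫ x, u m x * (starRingEnd ℂ) (u n x) = if m = n then 1 else 0)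
    (S : Set (EuclideanSpace ℝ (Fin d))) (hS : MeasurableSet S) (hS' : volume S ≠ ∞) :
    ∑' n, ‖∫ x in S, u n x‖ₑ ^ 2 ≤ volume S := by
  have hm : ∀ n, MemLp (u n) 2 volume := fun n => lt_memLp (u n) (hu n) (by simpa using ho n n)
  have hon : Orthonormal ℂ (fun n => (hm n).toLp (u n)) := by
    rw [orthonormal_iff_ite]
    intro i j
    rw [L2.inner_def]
    have : ∀ᵐ x, inner ℂ ((hm i).toLp (u i) x) ((hm j).toLp (u j) x)
        = u j x * (starRingEnd ℂ) (u i x) := by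
      filter_upwards [(hm i).coeFn_toLp, (hm j).coeFn_toLp] with x h1 h2
      rw [h1, h2]
      simp [mul_comm]
    rw [integral_congr_ae this, ho j i]
    simp [eq_comm]
  have hin : ∀ n, ‖inner ℂ ((hm n).toLp (u n)) (indicatorConstLp 2 hS hS' (1 : ℂ))‖
      = ‖∫ x in S, u n x‖ := by
    intro n
    rw [norm_inner_symm, L2.inner_indicatorConstLp_one hS hS']
    congr 1
    exact setIntegral_congr_ae hS ((hm n).coeFn_toLp.mono fun x hx _ => hx)
  refine ENNReal.tsum_le_of_sum_range_le fun N => ?_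
  have hb := hon.sum_inner_products_le (indicatorConstLp 2 hS hS' (1 : ℂ)) (s := Finset.range N)
  simp only [hin] at hb
  have hn : ‖indicatorConstLp 2 hS hS' (1 : ℂ)‖ ^ 2 = (volume S).toReal := by
    rw [norm_indicatorConstLp two_ne_zero (by simp)]
    simp only [norm_one, one_mul, Measure.real]
    rw [← Real.rpow_natCast, ← Real.rpow_mul ENNReal.toReal_nonneg]
    norm_num
  rw [hn] at hb
  calc _ = ENNReal.ofReal (∑ n ∈ Finset.range N, ‖∫ x in S, u n x‖ ^ 2) := by
        rw [ENNReal.ofReal_sum_of_nonneg (fun _ _ => by positivity)]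
        refine Finset.sum_congr rfl fun n _ => ?_
        rw [ENNReal.ofReal_pow (norm_nonneg _), ofReal_norm]
    _ ≤ ENNReal.ofReal (volume S).toReal := ENNReal.ofReal_le_ofReal hb
    _ = _ := ENNReal.ofReal_toReal hS'

lemma lt_single {d : ℕ} (u : EuclideanSpace ℝ (Fin d) → ℂ) (hu : ContDiff ℝ 1 u)
    (x : EuclideanSpace ℝ (Fin d)) {r : ℝ} (hr : 0 < r) :
    ENNReal.ofReal r ^ d * ltV d * ‖u x‖ₑ ≤
      ENNReal.ofReal r ^ d * (ENNReal.ofReal r * ltM (fun z => ‖fderiv ℝ u z‖ₑ) x) +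
      ‖∫ z in Metric.ball x r, u z‖ₑ := by
  have hc := hu.continuous
  have hvol : volume (Metric.ball x r) = ENNReal.ofReal r ^ d * ltV d := by
    rw [Measure.addHaar_ball_of_pos _ _ hr, finrank_euclideanSpace_fin, ENNReal.ofReal_pow hr.le]
    rfl
  have hint : ∀ g : EuclideanSpace ℝ (Fin d) → ℂ, Continuous g →
      IntegrableOn g (Metric.ball x r) := fun g hg =>
    (hg.continuousOn.integrableOn_compact (isCompact_closedBall x r)).mono_set
      Metric.ball_subset_closedBall
  have h1 : ∫ z in Metric.ball x r, (u z - u x)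
      = (∫ z in Metric.ball x r, u z) - (volume (Metric.ball x r)).toReal • u x := by
    rw [integral_sub (hint u hc) (hint _ continuous_const), setIntegral_const]
    rfl
  have h2 : (volume (Metric.ball x r)).toReal • u x =
      (∫ z in Metric.ball x r, u z) - ∫ z in Metric.ball x r, (u z - u x) := by
    rw [h1]; abel
  have h3 : ‖(volume (Metric.ball x r)).toReal • u x‖ₑ = ENNReal.ofReal r ^ d * ltV d * ‖u x‖ₑ := by
    rw [enorm_smul, Real.enorm_eq_ofReal ENNReal.toReal_nonneg,
      ENNReal.ofReal_toReal measure_ball_lt_top.ne, hvol]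
  rw [← h3, h2, add_comm]
  refine enorm_sub_le.trans ?_
  gcongr
  refine (enorm_integral_le_lintegral_enorm _).trans ?_
  rw [lt_change (fun z => ‖u z - u x‖ₑ) (by fun_prop) x hr, ENNReal.ofReal_pow hr.le]
  gcongr
  exact lt_poincare u hu x hr

lemma lt_two_sq (a b : ℝ≥0∞) : (a + b) ^ 2 ≤ 2 * a ^ 2 + 2 * b ^ 2 := by
  have := ENNReal.rpow_add_le_mul_rpow_add_rpow a b (p := 2) (by norm_num)
  norm_num at this
  calc _ ≤ _ := this
    _ = _ := by ring

lemma lt_pointwise {d : ℕ} (u : ℕ → EuclideanSpace ℝ (Fin d) → ℂ) (lam : ℕ → ℝ)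
    (hu : ∀ n, ContDiff ℝ 1 (u n))
    (ho : ∀ m n : ℕ, ∫ x, u m x * (starRingEnd ℂ) (u n x) = if m = n then 1 else 0)
    (hl : ∀ n, 0 ≤ lam n ∧ lam n ≤ 1)
    (x : EuclideanSpace ℝ (Fin d)) (w : ℝ≥0∞) (hw0 : w ≠ 0) (hw : w ≠ ∞) :
    w ^ d * ltV d ^ 2 * (∑' n, ENNReal.ofReal (lam n * ‖u n x‖ ^ 2)) ≤
      2 * w ^ (d + 2) * (∑' n, ENNReal.ofReal (lam n) * ltM (fun z => ‖fderiv ℝ (u n) z‖ₑ) x ^ 2)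
       + 2 * ltV d := by
  have hr : 0 < w.toReal := ENNReal.toReal_pos hw0 hw
  have hrw : ENNReal.ofReal w.toReal = w := ENNReal.ofReal_toReal hw
  have hvol : volume (Metric.ball x w.toReal) = w ^ d * ltV d := by
    rw [Measure.addHaar_ball_of_pos _ _ hr, finrank_euclideanSpace_fin, ENNReal.ofReal_pow hr.le,
      hrw]
    rfl
  have hb := lt_bessel u (fun n => (hu n).continuous) ho (Metric.ball x w.toReal)
    measurableSet_ball measure_ball_lt_top.ne
  rw [hvol] at hb
  set G := fun n => ltM (fun z => ‖fderiv ℝ (u n) z‖ₑ) x with hG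
  set I := fun n => ‖∫ z in Metric.ball x w.toReal, u n z‖ₑ with hI
  have hs : ∀ n, w ^ d * ltV d * ‖u n x‖ₑ ≤ w ^ d * (w * G n) + I n := by
    intro n
    have := lt_single (u n) (hu n) x hr
    rwa [hrw] at this
  have hwd0 : w ^ d ≠ 0 := pow_ne_zero _ hw0
  have hwd : w ^ d ≠ ∞ := ENNReal.pow_ne_top hw
  rw [← ENNReal.mul_le_mul_iff_right hwd0 hwd]
  calc w ^ d * (w ^ d * ltV d ^ 2 * (∑' n, ENNReal.ofReal (lam n * ‖u n x‖ ^ 2)))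
      = ∑' n, ENNReal.ofReal (lam n) * (w ^ d * ltV d * ‖u n x‖ₑ) ^ 2 := by
        rw [← mul_assoc, ← ENNReal.tsum_mul_left]
        congr 1
        ext n
        rw [ENNReal.ofReal_mul (hl n).1, ENNReal.ofReal_pow (norm_nonneg _), ofReal_norm]
        ring
    _ ≤ ∑' n, (2 * w ^ (2 * d + 2) * (ENNReal.ofReal (lam n) * G n ^ 2) + 2 * I n ^ 2) := by
        refine ENNReal.tsum_le_tsum fun n => ?_
        calc _ ≤ ENNReal.ofReal (lam n) * (w ^ d * (w * G n) + I n) ^ 2 := by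
              gcongr
              exact hs n
          _ ≤ ENNReal.ofReal (lam n) * (2 * (w ^ d * (w * G n)) ^ 2 + 2 * I n ^ 2) := by
              gcongr
              exact lt_two_sq _ _
          _ = 2 * w ^ (2 * d + 2) * (ENNReal.ofReal (lam n) * G n ^ 2) +
              ENNReal.ofReal (lam n) * (2 * I n ^ 2) := by ring
          _ ≤ 2 * w ^ (2 * d + 2) * (ENNReal.ofReal (lam n) * G n ^ 2) + 1 * (2 * I n ^ 2) := by
              gcongr
              exact ENNReal.ofReal_le_one.2 (hl n).2
          _ = _ := by rw [one_mul]
    _ = 2 * w ^ (2 * d + 2) * (∑' n, ENNReal.ofReal (lam n) * G n ^ 2) + 2 * ∑' n, I n ^ 2 := by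
        rw [ENNReal.tsum_add, ENNReal.tsum_mul_left, ENNReal.tsum_mul_left]
    _ ≤ 2 * w ^ (2 * d + 2) * (∑' n, ENNReal.ofReal (lam n) * G n ^ 2) + 2 * (w ^ d * ltV d) := by
        gcongr
    _ = _ := by ring

lemma lt_optimize {d : ℕ} (hd : 1 ≤ d) (v R G : ℝ≥0∞) (hv0 : v ≠ 0) (hv : v ≠ ∞)
    (h : ∀ w : ℝ≥0∞, w ≠ 0 → w ≠ ∞ → w ^ d * v ^ 2 * R ≤ 2 * w ^ (d + 2) * G + 2 * v) :
    R ^ (1 + 2 / (d : ℝ)) ≤ ((2 + 2 * v) / v ^ 2) ^ (1 + 2 / (d : ℝ)) * G := by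
  have hdpos : (0 : ℝ) < d := by exact_mod_cast hd
  have hv20 : v ^ 2 ≠ 0 := pow_ne_zero _ hv0
  have hv2 : v ^ 2 ≠ ∞ := ENNReal.pow_ne_top hv
  have hc0 : (2 + 2 * v) / v ^ 2 ≠ 0 := by
    refine (ENNReal.div_pos ?_ hv2).ne'
    simp
  have hc : (2 + 2 * v) / v ^ 2 ≠ ∞ :=
    ENNReal.div_ne_top (ENNReal.add_ne_top.2 ⟨by simp, ENNReal.mul_ne_top (by simp) hv⟩) hv20
  have hp : 0 < 1 + 2 / (d : ℝ) := by positivity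
  by_cases hGt : G = ∞
  · rw [hGt, ENNReal.mul_top]
    · exact le_top
    · exact (ENNReal.rpow_pos (pos_iff_ne_zero.2 hc0) hc).ne'
  by_cases hG0 : G = 0
  · have hR : R = 0 := by
      subst hG0
      by_contra hR
      have hvr : v ^ 2 * R ≠ 0 := mul_ne_zero hv20 hR
      obtain ⟨n, hn⟩ := ENNReal.exists_nat_mul_gt hvr
        (ENNReal.mul_ne_top (by simp) hv : 2 * v ≠ ∞)
      have h1 := h ((n : ℝ≥0∞) + 1) (by simp) (by simp)
      rw [mul_zero, zero_add, mul_assoc] at h1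
      have h2 : (n : ℝ≥0∞) ≤ ((n : ℝ≥0∞) + 1) ^ d :=
        le_self_add.trans (le_self_pow₀ (by simp) (by omega))
      have h3 : (n : ℝ≥0∞) * (v ^ 2 * R) ≤ 2 * v := le_trans (by gcongr) h1
      exact absurd hn (not_lt.2 h3)
    rw [hR, ENNReal.zero_rpow_of_pos hp]
    exact zero_le
  · set s : ℝ := -(1 / ((d : ℝ) + 2)) with hs
    have hw0 : G ^ s ≠ 0 := (ENNReal.rpow_pos (pos_iff_ne_zero.2 hG0) hGt).ne'
    have hw : G ^ s ≠ ∞ := ENNReal.rpow_ne_top_of_ne_zero hG0 hGt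
    have h1 := h (G ^ s) hw0 hw
    have e1 : (G ^ s) ^ (d + 2) * G = 1 := by
      rw [← ENNReal.rpow_natCast, ← ENNReal.rpow_mul]
      nth_rewrite 2 [← ENNReal.rpow_one G]
      rw [← ENNReal.rpow_add _ _ hG0 hGt]
      have : s * ((d + 2 : ℕ) : ℝ) + 1 = 0 := by
        rw [hs]; push_cast; field_simp; ring
      rw [this, ENNReal.rpow_zero]
    rw [mul_assoc 2, e1, mul_one] at h1
    have hR : R ≤ (2 + 2 * v) / v ^ 2 * G ^ ((d : ℝ) / (d + 2)) := by
      have e2 : G ^ ((d : ℝ) / (d + 2)) * (G ^ s) ^ d = 1 := by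
        rw [← ENNReal.rpow_natCast, ← ENNReal.rpow_mul, ← ENNReal.rpow_add _ _ hG0 hGt]
        have : (d : ℝ) / (d + 2) + s * (d : ℝ) = 0 := by
          rw [hs]; field_simp; ring
        rw [this, ENNReal.rpow_zero]
      calc R = G ^ ((d : ℝ) / (d + 2)) * (v ^ 2)⁻¹ * ((G ^ s) ^ d * v ^ 2 * R) := by
            calc R = (G ^ ((d : ℝ) / (d + 2)) * (G ^ s) ^ d) * ((v ^ 2)⁻¹ * v ^ 2) * R := by
                  rw [e2, ENNReal.inv_mul_cancel hv20 hv2]; simp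
              _ = _ := by ring
        _ ≤ G ^ ((d : ℝ) / (d + 2)) * (v ^ 2)⁻¹ * (2 + 2 * v) := by gcongr
        _ = _ := by rw [div_eq_mul_inv (2 + 2 * v)]; ring
    calc R ^ (1 + 2 / (d : ℝ))
        ≤ ((2 + 2 * v) / v ^ 2 * G ^ ((d : ℝ) / (d + 2))) ^ (1 + 2 / (d : ℝ)) := by gcongr
      _ = _ := by
        rw [ENNReal.mul_rpow_of_nonneg _ _ hp.le, ← ENNReal.rpow_mul]
        have : (d : ℝ) / (d + 2) * (1 + 2 / (d : ℝ)) = 1 := by field_simp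
        rw [this, ENNReal.rpow_one]

lemma lt_gradSq {d : ℕ} (u : EuclideanSpace ℝ (Fin d) → ℂ) (x : EuclideanSpace ℝ (Fin d)) :
    ‖fderiv ℝ u x‖ₑ ^ 2 ≤ ENNReal.ofReal (gradSq u x) := by
  rw [← ofReal_norm, ← ENNReal.ofReal_pow (norm_nonneg _)]
  apply ENNReal.ofReal_le_ofReal
  have hg : 0 ≤ gradSq u x := Finset.sum_nonneg fun _ _ => by positivity
  rw [← Real.le_sqrt (norm_nonneg _) hg]
  refine ContinuousLinearMap.opNorm_le_bound _ (Real.sqrt_nonneg _) fun v => ?_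
  have hv : v = ∑ i, v i • EuclideanSpace.single i (1 : ℝ) := by
    ext j
    simp [Finset.sum_apply, Pi.single_apply]
  calc ‖fderiv ℝ u x v‖ = ‖∑ i, v i • fderiv ℝ u x (EuclideanSpace.single i 1)‖ := by
        conv_lhs => rw [hv]
        simp
    _ ≤ ∑ i, ‖fderiv ℝ u x (EuclideanSpace.single i 1)‖ * ‖v i‖ := by
        refine (norm_sum_le _ _).trans (Finset.sum_le_sum fun i _ => ?_)
        rw [norm_smul, mul_comm]
    _ ≤ √(∑ i, ‖fderiv ℝ u x (EuclideanSpace.single i 1)‖ ^ 2) * √(∑ i, ‖v i‖ ^ 2) :=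
        Real.sum_mul_le_sqrt_mul_sqrt _ _ _
    _ = _ := by rw [EuclideanSpace.norm_eq]; rfl

/-- **Lieb–Thirring inequality** for countable orthonormal families of `C¹` functions,
with occupation numbers `0 ≤ λₙ ≤ 1`. Both sides are interpreted in `[0,∞]`. -/
theorem lieb_thirring_countable (d : ℕ) (hd : 1 ≤ d) :
    ∃ K : ℝ, 0 < K ∧
      ∀ (u : ℕ → EuclideanSpace ℝ (Fin d) → ℂ) (lam : ℕ → ℝ),
        (∀ n, ContDiff ℝ 1 (u n)) →
        (∀ m n : ℕ, ∫ x, u m x * (starRingEnd ℂ) (u n x) = if m = n then 1 else 0) →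
        (∀ n, 0 ≤ lam n ∧ lam n ≤ 1) →
        ENNReal.ofReal K *
            ∫⁻ x, (∑' n, ENNReal.ofReal (lam n * ‖u n x‖ ^ 2)) ^ (1 + 2 / (d : ℝ))
          ≤ ∑' n, ENNReal.ofReal (lam n) * ∫⁻ x, ENNReal.ofReal (gradSq (u n) x) := by
  set C1 : ℝ≥0∞ := ((2 + 2 * ltV d) / ltV d ^ 2) ^ (1 + 2 / (d : ℝ)) with hC1
  set C2 : ℝ≥0∞ := 8 * (ENNReal.ofReal (5 ^ d) * ltV d) * ltV d with hC2
  have hV0 := ltV_ne_zero d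
  have hV := ltV_ne_top d
  have hp : 0 ≤ 1 + 2 / (d : ℝ) := by positivity
  have hC1t : C1 ≠ ∞ := by
    apply ENNReal.rpow_ne_top_of_nonneg hp
    exact ENNReal.div_ne_top (ENNReal.add_ne_top.2 ⟨by simp, ENNReal.mul_ne_top (by simp) hV⟩)
      (pow_ne_zero _ hV0)
  have hC2t : C2 ≠ ∞ := by
    refine ENNReal.mul_ne_top (ENNReal.mul_ne_top (by simp) (ENNReal.mul_ne_top ?_ hV)) hV
    exact ENNReal.ofReal_ne_top
  have hCt : C1 * C2 + 1 ≠ ∞ := ENNReal.add_ne_top.2 ⟨ENNReal.mul_ne_top hC1t hC2t, by simp⟩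
  have hC0 : C1 * C2 + 1 ≠ 0 := by simp
  refine ⟨((C1 * C2 + 1)⁻¹).toReal, ENNReal.toReal_pos (ENNReal.inv_ne_zero.2 hCt)
    (ENNReal.inv_ne_top.2 hC0), ?_⟩
  intro u lam hu ho hl
  rw [ENNReal.ofReal_toReal (ENNReal.inv_ne_top.2 hC0)]
  have hfm : ∀ n, Measurable (fun z => ‖fderiv ℝ (u n) z‖ₑ) := fun n =>
    (((hu n).continuous_fderiv one_ne_zero).enorm).measurable
  have hM : ∀ n, Measurable (ltM (fun z => ‖fderiv ℝ (u n) z‖ₑ)) := fun n =>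
    ltM_measurable _ (hfm n)
  set T := ∑' n, ENNReal.ofReal (lam n) * ∫⁻ x, ENNReal.ofReal (gradSq (u n) x) with hT
  have main : ∫⁻ x, (∑' n, ENNReal.ofReal (lam n * ‖u n x‖ ^ 2)) ^ (1 + 2 / (d : ℝ))
      ≤ C1 * C2 * T := by
    calc _ ≤ ∫⁻ x, C1 * ∑' n, ENNReal.ofReal (lam n) *
            ltM (fun z => ‖fderiv ℝ (u n) z‖ₑ) x ^ 2 := by
          refine lintegral_mono fun x => ?_
          exact lt_optimize hd (ltV d) _ _ hV0 hV
            (fun w hw0 hw => lt_pointwise u lam hu ho hl x w hw0 hw)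
      _ = C1 * ∑' n, ENNReal.ofReal (lam n) *
            ∫⁻ x, ltM (fun z => ‖fderiv ℝ (u n) z‖ₑ) x ^ 2 := by
          rw [lintegral_const_mul' _ _ hC1t, lintegral_tsum]
          · congr 2
            ext n
            rw [lintegral_const_mul' _ _ ENNReal.ofReal_ne_top]
          · intro n
            exact (((hM n).pow_const 2).const_mul _).aemeasurable
      _ ≤ C1 * ∑' n, ENNReal.ofReal (lam n) *
            (C2 * ∫⁻ x, ENNReal.ofReal (gradSq (u n) x)) := by
          gcongr with n
          refine (lt_maximal _ (hfm n)).trans ?_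
          gcongr with x
          exact lt_gradSq (u n) x
      _ = C1 * C2 * T := by
          rw [hT, mul_assoc]
          congr 1
          rw [← ENNReal.tsum_mul_left]
          congr 1
          ext n
          ring
  calc _ ≤ (C1 * C2 + 1)⁻¹ * ((C1 * C2 + 1) * T) := by
        gcongr
        exact main.trans (by gcongr; exact le_self_add)
    _ = T := by
        rw [← mul_assoc, ENNReal.inv_mul_cancel hC0 hCt, one_mul]
end

section
/- There exists a constant C_d > 0 depending only on the dimension d such that the following holds: for every open ball B ⊂ ℝ^d, every finite family u_1, …, u_N of continuously differentiable functions from ℝ^d to ℂ whose restrictions to B are orthonormal in L²(B), and every choice of coefficients λ_1, …, λ_N ∈ [0,1], if ∫_B ρ(x) dx = 2 where ρ(x) = Σ_{n=1}^N λ_n |u_n(x)|², then Σ_{n=1}^N λ_n ∫_B |∇u_n(x)|² dx ≥ (1/C_d) ∫_B ρ(x)^{1+2/d} dx. -/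
open MeasureTheory
open scoped BigOperators

abbrev EE (d : ℕ) := EuclideanSpace ℝ (Fin d)

/-- Lebesgue measure restricted to the ball. -/
noncomputable abbrev bm {d : ℕ} (c : EE d) (r : ℝ) : Measure (EE d) :=
  volume.restrict (Metric.ball c r)

instance bm_fin {d : ℕ} (c : EE d) (r : ℝ) :
    IsFiniteMeasure (volume.restrict (Metric.ball c r) : Measure (EE d)) :=
  ⟨by rw [Measure.restrict_apply_univ]; exact measure_ball_lt_top⟩

lemma bm_int {d : ℕ} (c : EE d) (r : ℝ) {F : Type*} [NormedAddCommGroup F]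
    [SecondCountableTopology F] {f : EE d → F} (hf : Continuous f) : Integrable f (bm c r) := by
  have : IntegrableOn f (Metric.closedBall c r) :=
    hf.continuousOn.integrableOn_compact (isCompact_closedBall c r)
  exact this.mono_set Metric.ball_subset_closedBall

lemma bm_int2 {d : ℕ} (c : EE d) (r : ℝ) {f : EE d × EE d → ℝ} (hf : Continuous f) :
    Integrable f ((bm c r).prod (bm c r)) := by
  rw [Measure.prod_restrict]
  have : IntegrableOn f (Metric.closedBall c r ×ˢ Metric.closedBall c r)
      ((volume : Measure (EE d)).prod volume) :=
    hf.continuousOn.integrableOn_compact ((isCompact_closedBall c r).prod (isCompact_closedBall c r))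
  exact this.mono_set (Set.prod_mono Metric.ball_subset_closedBall Metric.ball_subset_closedBall)

lemma bm_int3 {d : ℕ} (c : EE d) (r : ℝ) {f : ℝ × EE d → ℝ} (hf : Continuous f) :
    Integrable f ((volume.restrict (Set.Ioc (0:ℝ) 1)).prod (bm c r)) := by
  rw [Measure.prod_restrict]
  have : IntegrableOn f (Set.Icc (0:ℝ) 1 ×ˢ Metric.closedBall c r)
      ((volume : Measure ℝ).prod volume) :=
    hf.continuousOn.integrableOn_compact (isCompact_Icc.prod (isCompact_closedBall c r))
  exact this.mono_set (Set.prod_mono Set.Ioc_subset_Icc_self Metric.ball_subset_closedBall)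

lemma comb_mem {d : ℕ} {c : EE d} {r : ℝ} {x y : EE d} (hx : x ∈ Metric.ball c r)
    (hy : y ∈ Metric.ball c r) {t : ℝ} (h0 : 0 ≤ t) (h1 : t ≤ 1) :
    (1 - t) • x + t • y ∈ Metric.ball c r :=
  convex_ball c r hx hy (by linarith) h0 (by ring)

lemma chg0 {d : ℕ} (c : EE d) (r : ℝ) {h : EE d → ℝ} (hc : Continuous h) (h0 : ∀ x, 0 ≤ h x)
    {y : EE d} (hy : y ∈ Metric.ball c r) {a : ℝ} (ha0 : 0 ≤ a) (ha : a < 1) :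
    ∫ x, h ((1 - a) • x + a • y) ∂(bm c r) ≤ ((1 - a) ^ d)⁻¹ * ∫ x, h x ∂(bm c r) := by
  have hne : (1 - a) ≠ 0 := by linarith
  set g : EE d → ℝ := (Metric.ball c r).indicator h with hg
  have hgi : Integrable g := (integrable_indicator_iff measurableSet_ball).2 (bm_int c r hc)
  have hg0 : ∀ x, 0 ≤ g x := fun x => Set.indicator_nonneg (fun x _ => h0 x) x
  have e1 : ∫ x, h ((1 - a) • x + a • y) ∂(bm c r) = ∫ x, g ((1 - a) • x + a • y) ∂(bm c r) := by
    apply setIntegral_congr_fun measurableSet_ball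
    intro x hx
    simp only [hg]
    rw [Set.indicator_of_mem (comb_mem hx hy ha0 (by linarith))]
  have hgi2 : Integrable (fun x => g ((1 - a) • x + a • y)) :=
    (hgi.comp_add_right (a • y)).comp_smul hne
  have e2 : ∫ x, g ((1 - a) • x + a • y) ∂(bm c r) ≤ ∫ x, g ((1 - a) • x + a • y) :=
    setIntegral_le_integral hgi2 (Filter.Eventually.of_forall fun x => hg0 _)
  have e3 : ∫ x, g ((1 - a) • x + a • y) = |((1 - a) ^ d)⁻¹| * ∫ x, g x := by
    have := Measure.integral_comp_smul (volume : Measure (EE d)) (fun x => g (x + a • y)) (1 - a)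
    rw [this, integral_add_right_eq_self]
    simp
  have e4 : ∫ x, g x = ∫ x, h x ∂(bm c r) := integral_indicator measurableSet_ball
  have h1a : 0 ≤ 1 - a := by linarith
  rw [abs_of_nonneg (by positivity)] at e3
  rw [e1]; refine e2.trans ?_
  rw [e3, e4]

lemma chg {d : ℕ} (c : EE d) (r : ℝ) {h : EE d → ℝ} (hc : Continuous h) (h0 : ∀ x, 0 ≤ h x)
    {y : EE d} (hy : y ∈ Metric.ball c r) {a : ℝ} (ha0 : 0 ≤ a) (ha : a ≤ 1 / 2) :
    ∫ x, h ((1 - a) • x + a • y) ∂(bm c r) ≤ 2 ^ d * ∫ x, h x ∂(bm c r) := by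
  refine (chg0 c r hc h0 hy ha0 (by linarith)).trans ?_
  apply mul_le_mul_of_nonneg_right _ (integral_nonneg h0)
  rw [← inv_pow]
  apply pow_le_pow_left₀ (inv_nonneg.2 (by linarith))
  rw [inv_le_comm₀ (by linarith) (by norm_num)]; linarith

lemma sq_int_le {g : ℝ → ℝ} (hg : Continuous g) :
    (∫ s in (0:ℝ)..1, g s) ^ 2 ≤ ∫ s in (0:ℝ)..1, g s ^ 2 := by
  set m := ∫ s in (0:ℝ)..1, g s with hm
  have h : 0 ≤ ∫ s in (0:ℝ)..1, (g s - m) ^ 2 :=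
    intervalIntegral.integral_nonneg (by norm_num) (fun s _ => sq_nonneg _)
  have e : ∫ s in (0:ℝ)..1, (g s - m) ^ 2 = (∫ s in (0:ℝ)..1, g s ^ 2) - m ^ 2 := by
    have : ∀ s, (g s - m) ^ 2 = g s ^ 2 - (2 * m) * g s + m ^ 2 := fun s => by ring
    simp_rw [this]
    rw [intervalIntegral.integral_add, intervalIntegral.integral_sub,
      intervalIntegral.integral_const_mul, ← hm]
    · simp; ring
    all_goals exact Continuous.intervalIntegrable (by fun_prop) _ _
  linarith

lemma key {d : ℕ} (c : EE d) (r : ℝ) {F : Type*} [NormedAddCommGroup F] [NormedSpace ℝ F]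
    [CompleteSpace F] {f : EE d → F} (hf : ContDiff ℝ 1 f)
    {y : EE d} (hy : y ∈ Metric.ball c r) {t : ℝ} (ht0 : 0 ≤ t) (ht : t ≤ 1 / 2) :
    ∫ x, ‖f x - f ((1 - t) • x + t • y)‖ ^ 2 ∂(bm c r)
      ≤ (2 * r * t) ^ 2 * 2 ^ d * ∫ x, ‖fderiv ℝ f x‖ ^ 2 ∂(bm c r) := by
  have hfc : Continuous f := hf.continuous
  have hdc : Continuous (fderiv ℝ f) := hf.continuous_fderiv (by norm_num)
  have hr : 0 < r := by
    by_contra h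
    rw [Metric.ball_eq_empty.2 (by linarith)] at hy
    exact hy
  have pt : ∀ x ∈ Metric.ball c r, ‖f x - f ((1 - t) • x + t • y)‖ ^ 2 ≤
      ∫ s in (0:ℝ)..1, (2 * r * t) ^ 2 * ‖fderiv ℝ f ((1 - s * t) • x + (s * t) • y)‖ ^ 2 := by
    intro x hx
    have hder : ∀ s : ℝ, HasDerivAt (fun s : ℝ => f ((1 - s * t) • x + (s * t) • y))
        (fderiv ℝ f ((1 - s * t) • x + (s * t) • y) (t • (y - x))) s := by
      intro s
      have h1 : HasDerivAt (fun s : ℝ => (1 - s * t) • x + (s * t) • y) (t • (y - x)) s := by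
        have h2 : HasDerivAt (fun s : ℝ => s * t) t s := by
          simpa using (hasDerivAt_id s).mul_const t
        have h3 := ((h2.const_sub 1).smul_const x).add (h2.smul_const y)
        have h4 : t • (y - x) = -t • x + t • y := by rw [smul_sub, neg_smul]; abel
        rw [h4]; exact h3
      exact ((hf.differentiable (by norm_num)).differentiableAt.hasFDerivAt).comp_hasDerivAt s h1
    have hcont : Continuous (fun s : ℝ =>
        fderiv ℝ f ((1 - s * t) • x + (s * t) • y) (t • (y - x))) := by fun_prop
    have ftc := intervalIntegral.integral_eq_sub_of_hasDerivAt (a := 0) (b := 1)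
      (fun s _ => hder s) (hcont.intervalIntegrable _ _)
    simp only [one_mul, zero_mul, sub_zero, one_smul, zero_smul, add_zero] at ftc
    rw [norm_sub_rev, ← ftc]
    have hn := intervalIntegral.norm_integral_le_integral_norm (a := (0:ℝ)) (b := 1) (μ := volume)
      (f := fun s : ℝ => fderiv ℝ f ((1 - s * t) • x + (s * t) • y) (t • (y - x))) (by norm_num)
    refine (pow_le_pow_left₀ (norm_nonneg _) hn 2).trans ?_
    refine (sq_int_le hcont.norm).trans ?_
    apply intervalIntegral.integral_mono_on (by norm_num)
    · exact Continuous.intervalIntegrable (by fun_prop) _ _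
    · exact Continuous.intervalIntegrable (by fun_prop) _ _
    · intro s _
      rw [← mul_pow]
      apply pow_le_pow_left₀ (norm_nonneg _)
      refine (ContinuousLinearMap.le_opNorm _ _).trans ?_
      rw [mul_comm]
      apply mul_le_mul_of_nonneg_right _ (norm_nonneg _)
      rw [norm_smul, Real.norm_of_nonneg ht0, mul_comm]
      apply mul_le_mul_of_nonneg_right _ ht0
      rw [← dist_eq_norm]
      have := dist_triangle_right y x c
      rw [Metric.mem_ball] at hx hy
      linarith
  have hFc : Continuous (fun p : ℝ × EE d =>
      (2 * r * t) ^ 2 * ‖fderiv ℝ f ((1 - p.1 * t) • p.2 + (p.1 * t) • y)‖ ^ 2) := by fun_prop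
  have hFi := bm_int3 c r hFc
  calc ∫ x, ‖f x - f ((1 - t) • x + t • y)‖ ^ 2 ∂(bm c r)
      ≤ ∫ x, (∫ s in Set.Ioc (0:ℝ) 1,
          (2 * r * t) ^ 2 * ‖fderiv ℝ f ((1 - s * t) • x + (s * t) • y)‖ ^ 2) ∂(bm c r) := by
        apply setIntegral_mono_on
        · exact bm_int c r (by fun_prop)
        · exact hFi.integral_prod_right
        · exact measurableSet_ball
        · intro x hx
          have := pt x hx
          rwa [intervalIntegral.integral_of_le (by norm_num)] at this
    _ = ∫ s in Set.Ioc (0:ℝ) 1, (∫ x,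
          (2 * r * t) ^ 2 * ‖fderiv ℝ f ((1 - s * t) • x + (s * t) • y)‖ ^ 2 ∂(bm c r)) := by
        rw [integral_integral_swap]
        exact hFi.swap
    _ ≤ ∫ s in Set.Ioc (0:ℝ) 1, ((2 * r * t) ^ 2 * (2 ^ d * ∫ x, ‖fderiv ℝ f x‖ ^ 2 ∂(bm c r))) := by
        apply setIntegral_mono_on
        · exact hFi.integral_prod_left
        · exact integrable_const _
        · exact measurableSet_Ioc
        · intro s hs
          rw [integral_const_mul]
          apply mul_le_mul_of_nonneg_left _ (sq_nonneg _)
          refine chg c r (h := fun x => ‖fderiv ℝ f x‖ ^ 2) (by fun_prop)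
            (fun x => sq_nonneg _) hy (mul_nonneg hs.1.le ht0) ?_
          nlinarith [hs.1, hs.2]
    _ = _ := by simp; ring

lemma poinc {d : ℕ} (c : EE d) (r : ℝ) {f : EE d → ℂ} (hf : ContDiff ℝ 1 f) :
    ∫ y, ∫ x, ‖f x - f y‖ ^ 2 ∂(bm c r) ∂(bm c r)
      ≤ 4 * r ^ 2 * 2 ^ d * (bm c r).real Set.univ * ∫ x, ‖fderiv ℝ f x‖ ^ 2 ∂(bm c r) := by
  have hfc : Continuous f := hf.continuous
  set I := ∫ x, ‖fderiv ℝ f x‖ ^ 2 ∂(bm c r) with hI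
  have hk : ∀ y ∈ Metric.ball c r,
      ∫ x, ‖f x - f ((1 - (1/2 : ℝ)) • x + (1/2 : ℝ) • y)‖ ^ 2 ∂(bm c r) ≤ r ^ 2 * 2 ^ d * I := by
    intro y hy
    have := key c r hf hy (t := 1/2) (by norm_num) le_rfl
    convert this using 3
    ring
  have hGc : Continuous (fun p : EE d × EE d =>
      ‖f p.2 - f ((1 - (1/2 : ℝ)) • p.2 + (1/2 : ℝ) • p.1)‖ ^ 2) := by fun_prop
  have hGi := bm_int2 c r hGc
  have hHc : Continuous (fun p : EE d × EE d =>
      ‖f p.1 - f ((1 - (1/2 : ℝ)) • p.1 + (1/2 : ℝ) • p.2)‖ ^ 2) := by fun_prop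
  have hHi := bm_int2 c r hHc
  have hDc : Continuous (fun p : EE d × EE d => ‖f p.2 - f p.1‖ ^ 2) := by fun_prop
  have hDi := bm_int2 c r hDc
  have hA : ∫ y, ∫ x, ‖f x - f ((1 - (1/2 : ℝ)) • x + (1/2 : ℝ) • y)‖ ^ 2 ∂(bm c r) ∂(bm c r)
      ≤ (bm c r).real Set.univ * (r ^ 2 * 2 ^ d * I) := by
    calc _ ≤ ∫ y, (r ^ 2 * 2 ^ d * I) ∂(bm c r) := by
          apply setIntegral_mono_on
          · exact hGi.integral_prod_left
          · exact integrable_const _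
          · exact measurableSet_ball
          · exact hk
      _ = _ := by rw [integral_const]; rfl
  have hB : ∫ y, ∫ x, ‖f y - f ((1 - (1/2 : ℝ)) • y + (1/2 : ℝ) • x)‖ ^ 2 ∂(bm c r) ∂(bm c r)
      ≤ (bm c r).real Set.univ * (r ^ 2 * 2 ^ d * I) := by
    rw [integral_integral_swap]
    · exact hA
    · exact hHi
  have pt : ∀ y x, ‖f x - f y‖ ^ 2 ≤ 2 * ‖f x - f ((1 - (1/2 : ℝ)) • x + (1/2 : ℝ) • y)‖ ^ 2
      + 2 * ‖f y - f ((1 - (1/2 : ℝ)) • y + (1/2 : ℝ) • x)‖ ^ 2 := by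
    intro y x
    have e : (1 - (1/2 : ℝ)) • y + (1/2 : ℝ) • x = (1 - (1/2 : ℝ)) • x + (1/2 : ℝ) • y := by
      norm_num [add_comm]
    rw [e]
    set m := f ((1 - (1/2 : ℝ)) • x + (1/2 : ℝ) • y)
    have h1 : ‖f x - f y‖ ≤ ‖f x - m‖ + ‖f y - m‖ := by
      have := norm_sub_le (f x - m) (f y - m)
      simpa using this
    nlinarith [norm_nonneg (f x - f y), sq_nonneg (‖f x - m‖ - ‖f y - m‖),
      norm_nonneg (f x - m), norm_nonneg (f y - m)]
  calc _ ≤ ∫ y, (2 * (∫ x, ‖f x - f ((1 - (1/2 : ℝ)) • x + (1/2 : ℝ) • y)‖ ^ 2 ∂(bm c r))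
      + 2 * ∫ x, ‖f y - f ((1 - (1/2 : ℝ)) • y + (1/2 : ℝ) • x)‖ ^ 2 ∂(bm c r)) ∂(bm c r) := by
        apply integral_mono
        · exact hDi.integral_prod_left
        · exact (hGi.integral_prod_left.const_mul 2).add (hHi.integral_prod_left.const_mul 2)
        · intro y
          dsimp only
          rw [← integral_const_mul, ← integral_const_mul, ← integral_add]
          · apply integral_mono
            · exact bm_int c r (by fun_prop)
            · exact bm_int c r (by fun_prop)
            · exact pt y
          · exact bm_int c r (by fun_prop)
          · exact bm_int c r (by fun_prop)
    _ ≤ _ := by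
        rw [integral_add (hGi.integral_prod_left.const_mul 2) (hHi.integral_prod_left.const_mul 2),
          integral_const_mul, integral_const_mul]
        linarith

lemma expand {d : ℕ} (c : EE d) (r : ℝ) {f : EE d → ℂ} (hfc : Continuous f) :
    ∫ y, ∫ x, ‖f x - f y‖ ^ 2 ∂(bm c r) ∂(bm c r)
      = 2 * (bm c r).real Set.univ * (∫ x, ‖f x‖ ^ 2 ∂(bm c r)) - 2 * ‖∫ x, f x ∂(bm c r)‖ ^ 2 := by
  set V := (bm c r).real Set.univ with hV
  set A := ∫ x, ‖f x‖ ^ 2 ∂(bm c r) with hA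
  set m := ∫ x, f x ∂(bm c r) with hm
  have e0 : ∀ a b : ℂ, ‖a - b‖ ^ 2 = ‖a‖ ^ 2 + ‖b‖ ^ 2 - 2 * (a * (starRingEnd ℂ) b).re := by
    intro a b
    rw [← Complex.normSq_eq_norm_sq, ← Complex.normSq_eq_norm_sq, ← Complex.normSq_eq_norm_sq,
      Complex.normSq_sub]
  have re_int : ∀ g : EE d → ℂ, Continuous g →
      ∫ x, (g x).re ∂(bm c r) = (∫ x, g x ∂(bm c r)).re := by
    intro g hg
    exact integral_re (𝕜 := ℂ) (bm_int c r hg)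
  have e1 : ∀ y, ∫ x, ‖f x - f y‖ ^ 2 ∂(bm c r)
      = A + V * ‖f y‖ ^ 2 - 2 * (m * (starRingEnd ℂ) (f y)).re := by
    intro y
    simp_rw [e0]
    rw [integral_sub, integral_add, integral_const_mul, integral_const,
      re_int _ (by fun_prop), integral_mul_const]
    · rfl
    all_goals exact bm_int c r (by fun_prop)
  simp_rw [e1]
  rw [integral_sub, integral_add, integral_const_mul, integral_const_mul, integral_const,
      re_int _ (by fun_prop), integral_const_mul, integral_conj, ← hm, ← hA,
      Complex.mul_conj, Complex.normSq_eq_norm_sq, ← hV]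
  · simp only [smul_eq_mul, Complex.ofReal_re]; ring
  all_goals exact bm_int c r (by fun_prop)

lemma bessel {d : ℕ} (c : EE d) (r : ℝ) {N : ℕ} {u : Fin N → EE d → ℂ}
    (hu : ∀ n, Continuous (u n))
    (ho : ∀ m n : Fin N, ∫ x, u m x * (starRingEnd ℂ) (u n x) ∂(bm c r) = if m = n then 1 else 0) :
    ∑ n, ‖∫ x, u n x ∂(bm c r)‖ ^ 2 ≤ (bm c r).real Set.univ := by
  set V := (bm c r).real Set.univ with hV
  set m := fun n => ∫ x, u n x ∂(bm c r) with hm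
  set S : EE d → ℂ := fun x => ∑ n, (starRingEnd ℂ) (m n) * u n x with hS
  have hSc : Continuous S := by fun_prop
  have iS : ∫ x, S x ∂(bm c r) = ((∑ n, ‖m n‖ ^ 2 : ℝ) : ℂ) := by
    simp only [hS]
    rw [integral_finsetSum _ (fun n _ => bm_int c r (by fun_prop))]
    push_cast
    refine Finset.sum_congr rfl fun n _ => ?_
    rw [integral_const_mul, mul_comm, ← Complex.ofReal_pow, ← Complex.normSq_eq_norm_sq,
      ← Complex.mul_conj]
  have iSS : ∫ x, S x * (starRingEnd ℂ) (S x) ∂(bm c r) = ((∑ n, ‖m n‖ ^ 2 : ℝ) : ℂ) := by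
    have : ∀ x, S x * (starRingEnd ℂ) (S x) = ∑ k, ∑ n,
        ((starRingEnd ℂ) (m k) * m n) * (u k x * (starRingEnd ℂ) (u n x)) := by
      intro x
      simp only [hS, map_sum, map_mul, Complex.conj_conj, Finset.sum_mul_sum]
      refine Finset.sum_congr rfl fun k _ => Finset.sum_congr rfl fun n _ => ?_
      ring
    simp_rw [this]
    rw [integral_finsetSum _ (fun n _ => bm_int c r (by fun_prop))]
    push_cast
    refine Finset.sum_congr rfl fun k _ => ?_
    rw [integral_finsetSum _ (fun n _ => bm_int c r (by fun_prop))]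
    simp_rw [integral_const_mul, ho]
    simp only [mul_ite, mul_one, mul_zero, Finset.sum_ite_eq, Finset.mem_univ, if_true]
    rw [mul_comm, ← Complex.ofReal_pow, ← Complex.normSq_eq_norm_sq,
      ← Complex.mul_conj]
  have h0 : 0 ≤ ∫ x, ((1 - S x) * (starRingEnd ℂ) (1 - S x)).re ∂(bm c r) := by
    apply integral_nonneg
    intro x
    dsimp only
    rw [Complex.mul_conj]
    simp [Complex.normSq_nonneg]
  have re_int : ∀ g : EE d → ℂ, Continuous g →
      ∫ x, (g x).re ∂(bm c r) = (∫ x, g x ∂(bm c r)).re := by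
    intro g hg
    exact integral_re (𝕜 := ℂ) (bm_int c r hg)
  rw [re_int _ (by fun_prop)] at h0
  have : ∀ x, (1 - S x) * (starRingEnd ℂ) (1 - S x)
      = 1 - S x - (starRingEnd ℂ) (S x) + S x * (starRingEnd ℂ) (S x) := by
    intro x
    simp only [map_sub, map_one]; ring
  simp_rw [this] at h0
  rw [integral_add, integral_sub, integral_sub, integral_conj, iS, iSS, integral_const] at h0
  · simp only [Complex.conj_ofReal, Complex.add_re, Complex.sub_re, Complex.ofReal_re,
      Complex.smul_re, Complex.one_re, smul_eq_mul, ← hV] at h0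
    linarith
  all_goals exact bm_int c r (by fun_prop)

lemma st_deriv_bound : ∃ L : ℝ, 0 ≤ L ∧ ∀ x, |deriv Real.smoothTransition x| ≤ L ∧
    ((x < 0 ∨ 1 ≤ x) → deriv Real.smoothTransition x = 0) := by
  have hc : Continuous (deriv Real.smoothTransition) :=
    (Real.smoothTransition.contDiff (n := 1)).continuous_deriv le_rfl
  obtain ⟨L, hL⟩ := (isCompact_Icc (a := (0:ℝ)) (b := 1)).exists_bound_of_continuousOn
    hc.continuousOn
  have hz : ∀ x : ℝ, (x < 0 ∨ 1 ≤ x) → deriv Real.smoothTransition x = 0 := by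
    rintro x (hx | hx)
    · apply IsLocalMin.deriv_eq_zero
      refine Filter.Eventually.of_forall fun y => ?_
      rw [Real.smoothTransition.zero_of_nonpos hx.le]
      exact Real.smoothTransition.nonneg y
    · apply IsLocalMax.deriv_eq_zero
      refine Filter.Eventually.of_forall fun y => ?_
      rw [Real.smoothTransition.one_of_one_le hx]
      exact Real.smoothTransition.le_one y
  have hL0 : 0 ≤ L := (norm_nonneg _).trans (hL 0 (by simp))
  refine ⟨L, hL0, fun x => ⟨?_, hz x⟩⟩
  by_cases hx : x < 0 ∨ 1 ≤ x
  · rw [hz x hx]; simpa using hL0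
  · push Not at hx
    exact hL x ⟨hx.1, hx.2.le⟩

lemma weak {d : ℕ} (c : EE d) (r : ℝ) (hr : 0 < r) {L : ℝ}
    (hL : ∀ x, |deriv Real.smoothTransition x| ≤ L ∧
    ((x < 0 ∨ 1 ≤ x) → deriv Real.smoothTransition x = 0))
    {ρ τ : EE d → ℝ} (hρ : ContDiff ℝ 1 ρ) (hτ : Continuous τ) (hρ0 : ∀ x, 0 ≤ ρ x)
    (hτ0 : ∀ x, 0 ≤ τ x) (hg : ∀ x, ‖fderiv ℝ ρ x‖ ^ 2 ≤ 4 * ρ x * τ x)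
    (h2 : ∫ x, ρ x ∂(bm c r) = 2) {s t : ℝ} (hs : 0 < s) (ht0 : 0 < t) (ht : t ≤ 1 / 2)
    (hst : s * t ^ d * (bm c r).real Set.univ = 4) :
    (bm c r).real {x | 2 * s ≤ ρ x} ≤ 2 * ((2 * r * t) ^ 2 * 2 ^ d) * (8 * L ^ 2 / s) *
      ∫ x, {x | s ≤ ρ x ∧ ρ x < 2 * s}.indicator τ x ∂(bm c r) := by
  set V := (bm c r).real Set.univ with hV
  have hρc := hρ.continuous
  have htd : 0 < t ^ d := by positivity
  have hVp : 0 < V := by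
    by_contra h
    have : s * t ^ d * V ≤ 0 := mul_nonpos_of_nonneg_of_nonpos (by positivity) (not_lt.1 h)
    linarith
  have hL0 : 0 ≤ L := (abs_nonneg _).trans (hL 0).1
  set w : EE d → ℝ := fun x => Real.smoothTransition (ρ x / s - 1) with hw
  have hwC : ContDiff ℝ 1 w :=
    (Real.smoothTransition.contDiff (n := 1)).comp ((hρ.div_const s).sub contDiff_const)
  have hwc := hwC.continuous
  have hm1 : MeasurableSet {x | s ≤ ρ x ∧ ρ x < 2 * s} :=
    (measurableSet_le measurable_const hρc.measurable).inter
      (measurableSet_lt hρc.measurable measurable_const)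
  have hm2 : MeasurableSet {x | 2 * s ≤ ρ x} := measurableSet_le measurable_const hρc.measurable
  set J := ∫ x, {x | s ≤ ρ x ∧ ρ x < 2 * s}.indicator τ x ∂(bm c r) with hJ
  -- gradient of w
  have hdw : ∀ x, fderiv ℝ w x = (deriv Real.smoothTransition (ρ x / s - 1) * s⁻¹) • fderiv ℝ ρ x := by
    intro x
    have h1 : HasFDerivAt (fun x => ρ x / s - 1) (s⁻¹ • fderiv ℝ ρ x) x := by
      have := ((hρ.differentiable (by norm_num)).differentiableAt (x := x)).hasFDerivAt
      have h3 := (this.mul_const s⁻¹).sub_const 1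
      simpa [div_eq_mul_inv] using h3
    have h2 : HasDerivAt Real.smoothTransition (deriv Real.smoothTransition (ρ x / s - 1))
        (ρ x / s - 1) :=
      (((Real.smoothTransition.contDiff (n := 1)).differentiable (by norm_num)).differentiableAt).hasDerivAt
    have := (h2.comp_hasFDerivAt x h1).fderiv
    rw [mul_smul]
    exact this
  have hgw : ∀ x, ‖fderiv ℝ w x‖ ^ 2 ≤ (8 * L ^ 2 / s) *
      {x | s ≤ ρ x ∧ ρ x < 2 * s}.indicator τ x := by
    intro x
    rw [hdw x, norm_smul]
    by_cases hx : s ≤ ρ x ∧ ρ x < 2 * s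
    · rw [Set.indicator_of_mem (by exact hx), norm_mul, mul_pow, mul_pow, Real.norm_eq_abs,
        Real.norm_eq_abs, abs_of_pos (inv_pos.2 hs)]
      have h1 : |deriv Real.smoothTransition (ρ x / s - 1)| ^ 2 ≤ L ^ 2 :=
        pow_le_pow_left₀ (abs_nonneg _) (hL _).1 2
      have h3 : ‖fderiv ℝ ρ x‖ ^ 2 ≤ 8 * s * τ x := by
        have := hg x
        nlinarith [hτ0 x, hx.2]
      calc _ ≤ L ^ 2 * s⁻¹ ^ 2 * (8 * s * τ x) := by gcongr
        _ = _ := by field_simp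
    · rw [Set.indicator_of_notMem (by exact hx), (hL _).2]
      · simp
      · by_cases h : s ≤ ρ x
        · right
          have : 2 * s ≤ ρ x := by
            by_contra h'
            exact hx ⟨h, not_le.1 h'⟩
          rw [le_sub_iff_add_le, le_div_iff₀ hs]; linarith
        · left
          rw [sub_lt_zero, div_lt_one hs]; linarith
  have hIw : ∫ x, ‖fderiv ℝ w x‖ ^ 2 ∂(bm c r) ≤ (8 * L ^ 2 / s) * J := by
    rw [hJ, ← integral_const_mul]
    apply integral_mono
    · exact bm_int c r ((hwC.continuous_fderiv (by norm_num)).norm.pow 2)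
    · exact ((bm_int c r hτ).indicator hm1).const_mul _
    · exact hgw
  have hGc : Continuous (fun p : EE d × EE d =>
      ‖w p.2 - w ((1 - t) • p.2 + t • p.1)‖ ^ 2) := by fun_prop
  have hGi := bm_int2 c r hGc
  have up : ∫ y, ∫ x, ‖w x - w ((1 - t) • x + t • y)‖ ^ 2 ∂(bm c r) ∂(bm c r)
      ≤ V * ((2 * r * t) ^ 2 * 2 ^ d * ((8 * L ^ 2 / s) * J)) := by
    calc _ ≤ ∫ y, ((2 * r * t) ^ 2 * 2 ^ d * ((8 * L ^ 2 / s) * J)) ∂(bm c r) := by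
          apply setIntegral_mono_on
          · exact hGi.integral_prod_left
          · exact integrable_const _
          · exact measurableSet_ball
          · intro y hy
            refine (key c r hwC hy ht0.le ht).trans ?_
            exact mul_le_mul_of_nonneg_left hIw (by positivity)
      _ = _ := by rw [integral_const]; rfl
  have low : V / 2 * (bm c r).real {x | 2 * s ≤ ρ x} ≤
      ∫ x, ∫ y, ‖w x - w ((1 - t) • x + t • y)‖ ^ 2 ∂(bm c r) ∂(bm c r) := by
    have e : V / 2 * (bm c r).real {x | 2 * s ≤ ρ x} =
        ∫ x, {x | 2 * s ≤ ρ x}.indicator (fun _ => V / 2) x ∂(bm c r) := by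
      rw [integral_indicator_const _ hm2, smul_eq_mul, mul_comm]
    rw [e]
    apply setIntegral_mono_on
    · exact (integrable_const _).indicator hm2
    · exact hGi.integral_prod_right
    · exact measurableSet_ball
    · intro x hx
      by_cases hxs : 2 * s ≤ ρ x
      · rw [Set.indicator_of_mem (by exact hxs)]
        have hwx : w x = 1 := by
          apply Real.smoothTransition.one_of_one_le
          rw [le_sub_iff_add_le, le_div_iff₀ hs]; linarith
        have pt : ∀ y, 1 - s⁻¹ * ρ ((1 - t) • x + t • y) ≤
            ‖w x - w ((1 - t) • x + t • y)‖ ^ 2 := by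
          intro y
          set z := (1 - t) • x + t • y
          by_cases hz : ρ z ≤ s
          · have hwz : w z = 0 := by
              apply Real.smoothTransition.zero_of_nonpos
              rw [sub_nonpos, div_le_one hs]; exact hz
            rw [hwx, hwz]
            have : 0 ≤ s⁻¹ * ρ z := mul_nonneg (inv_nonneg.2 hs.le) (hρ0 z)
            simpa using this
          · have : 1 ≤ s⁻¹ * ρ z := by
              rw [inv_mul_eq_div, le_div_iff₀ hs]; linarith
            have h5 := sq_nonneg ‖w x - w z‖
            linarith
        have hch : ∫ y, ρ ((1 - t) • x + t • y) ∂(bm c r) ≤ (t ^ d)⁻¹ * 2 := by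
          have := chg0 c r hρc hρ0 hx (a := 1 - t) (by linarith) (by linarith)
          rw [h2, sub_sub_cancel] at this
          simpa only [add_comm] using this
        calc V / 2 = V - s⁻¹ * ((t ^ d)⁻¹ * 2) := by
              have : V = 4 / (s * t ^ d) := by
                rw [eq_div_iff (by positivity)]; linarith
              rw [this]; field_simp; norm_num
          _ ≤ V - s⁻¹ * ∫ y, ρ ((1 - t) • x + t • y) ∂(bm c r) := by gcongr
          _ = ∫ y, (1 - s⁻¹ * ρ ((1 - t) • x + t • y)) ∂(bm c r) := by
              rw [integral_sub (integrable_const _) (bm_int c r (by fun_prop)),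
                integral_const_mul, integral_const, smul_eq_mul, mul_one]
          _ ≤ _ := by
              apply integral_mono
              · exact bm_int c r (by fun_prop)
              · exact bm_int c r (by fun_prop)
              · exact pt
      · rw [Set.indicator_of_notMem (by exact hxs)]
        exact integral_nonneg fun y => sq_nonneg _
  rw [integral_integral_swap hGi] at up
  have := low.trans up
  have h6 : V * (bm c r).real {x | 2 * s ≤ ρ x} ≤
      V * (2 * ((2 * r * t) ^ 2 * 2 ^ d) * (8 * L ^ 2 / s) * J) := by linarith
  exact le_of_mul_le_mul_left h6 hVp

lemma layer {M p q : ℝ} (hM : 0 < M) (hq : 0 ≤ q) (hp : p = 1 + q) {a : ℝ} (ha : 0 ≤ a) (K : ℕ)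
    (hK : a < 2 ^ K * (2 * M)) :
    a ^ p ≤ (2 * M) ^ q * a
      + ∑ k ∈ Finset.range K, (4 * (2 ^ k * M)) ^ p * (if 2 * (2 ^ k * M) ≤ a then 1 else 0) := by
  induction K with
  | zero =>
    simp only [pow_zero, one_mul] at hK
    simp only [Finset.range_zero, Finset.sum_empty, add_zero]
    rw [hp]
    rcases ha.eq_or_lt with h | h
    · rw [← h, Real.zero_rpow (by linarith)]; simp
    · rw [Real.rpow_add h, Real.rpow_one, mul_comm]
      gcongr
  | succ K ih =>
    rw [Finset.sum_range_succ]
    by_cases h : a < 2 ^ K * (2 * M)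
    · have := ih h
      have h2 : 0 ≤ (4 * (2 ^ K * M)) ^ p * (if 2 * (2 ^ K * M) ≤ a then (1:ℝ) else 0) := by
        split_ifs <;> positivity
      linarith
    · have h1 : 2 * (2 ^ K * M) ≤ a := by linarith
      rw [if_pos h1]
      have h2 : a ^ p ≤ (4 * (2 ^ K * M)) ^ p := by
        apply Real.rpow_le_rpow ha _ (by linarith)
        rw [pow_succ] at hK; linarith
      have h3 : 0 ≤ (2 * M) ^ q * a := by positivity
      have h4 : 0 ≤ ∑ k ∈ Finset.range K, (4 * (2 ^ k * M)) ^ p *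
          (if 2 * (2 ^ k * M) ≤ a then (1:ℝ) else 0) := by
        apply Finset.sum_nonneg
        intro k _
        split_ifs <;> positivity
      linarith

lemma disj {M : ℝ} (hM : 0 < M) (a b : ℝ) (hb : 0 ≤ b) (K : ℕ) :
    ∑ k ∈ Finset.range K, (if 2 ^ k * M ≤ a ∧ a < 2 * (2 ^ k * M) then b else 0)
      ≤ if a < 2 ^ K * M then b else 0 := by
  induction K with
  | zero => simp only [Finset.range_zero, Finset.sum_empty]; split_ifs <;> simp [hb]
  | succ K ih =>
    rw [Finset.sum_range_succ]
    have e : (2:ℝ) ^ (K + 1) * M = 2 * (2 ^ K * M) := by ring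
    have hp : 0 < 2 ^ K * M := by positivity
    rw [e]
    by_cases h : a < 2 ^ K * M
    · rw [if_pos h] at ih
      rw [if_neg (fun h' => absurd h'.1 (not_le.2 h)), if_pos (by linarith)]
      linarith
    · rw [if_neg h] at ih
      have h' := not_lt.1 h
      by_cases h2 : a < 2 * (2 ^ K * M)
      · rw [if_pos ⟨h', h2⟩, if_pos h2]; linarith
      · rw [if_neg (fun h' => h2 h'.2), if_neg h2]; linarith

lemma main_est (d : ℕ) (hd : 1 ≤ d) (c : EE d) (r : ℝ) (hr : 0 < r) {L : ℝ}
    (hL : ∀ x, |deriv Real.smoothTransition x| ≤ L ∧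
    ((x < 0 ∨ 1 ≤ x) → deriv Real.smoothTransition x = 0))
    {ρ τ : EE d → ℝ} (hρ : ContDiff ℝ 1 ρ) (hτ : Continuous τ) (hρ0 : ∀ x, 0 ≤ ρ x)
    (hτ0 : ∀ x, 0 ≤ τ x) (hg : ∀ x, ‖fderiv ℝ ρ x‖ ^ 2 ≤ 4 * ρ x * τ x)
    (h2 : ∫ x, ρ x ∂(bm c r) = 2) {ω : ℝ} (hω : 0 < ω)
    (hV : (bm c r).real Set.univ = ω * r ^ d)
    (hT : 1 ≤ r ^ 2 * 2 ^ (d + 1) * ∫ x, τ x ∂(bm c r)) :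
    ∫ x, ρ x ^ (1 + 2 / (d:ℝ)) ∂(bm c r) ≤
      ω ^ (-(2 / (d:ℝ))) * (4 ^ (1 + 2 / (d:ℝ)) * 64 * L ^ 2 * 2 ^ d * 4 ^ (2 / (d:ℝ))
        + 2 * (8 * 2 ^ d) ^ (2 / (d:ℝ)) * 2 ^ (d + 1)) * ∫ x, τ x ∂(bm c r) := by
  have hρc := hρ.continuous
  have hd0 : (0:ℝ) < d := by exact_mod_cast hd
  set q : ℝ := 2 / (d:ℝ) with hq
  have hq0 : 0 < q := by positivity
  set p : ℝ := 1 + q with hp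
  set V := ω * r ^ d with hVd
  have hVp : 0 < V := by positivity
  have hrq : (r ^ d) ^ q = r ^ 2 := by
    rw [← Real.rpow_natCast r d, ← Real.rpow_mul hr.le, hq,
      mul_div_cancel₀ _ hd0.ne']
    norm_num
  set M : ℝ := 4 * 2 ^ d / V with hMd
  have hM : 0 < M := by positivity
  set T := ∫ x, τ x ∂(bm c r) with hTd
  -- bound for rho
  obtain ⟨R, hR⟩ := (isCompact_closedBall c r).exists_bound_of_continuousOn hρc.continuousOn
  obtain ⟨K, hK⟩ := pow_unbounded_of_one_lt (R / (2 * M)) (one_lt_two : (1:ℝ) < 2)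
  rw [div_lt_iff₀ (by positivity)] at hK
  have hm1 : ∀ s : ℝ, MeasurableSet {x | s ≤ ρ x ∧ ρ x < 2 * s} := fun s =>
    (measurableSet_le measurable_const hρc.measurable).inter
      (measurableSet_lt hρc.measurable measurable_const)
  have hm2 : ∀ s : ℝ, MeasurableSet {x | s ≤ ρ x} :=
    fun s => measurableSet_le measurable_const hρc.measurable
  set D : ℝ := ω ^ (-q) * (4 ^ p * 64 * L ^ 2 * 2 ^ d * 4 ^ q) with hD
  have hD0 : 0 ≤ D := by positivity
  -- weak bound at each level
  have hwk : ∀ k : ℕ, (4 * (2 ^ k * M)) ^ p * (bm c r).real {x | 2 * (2 ^ k * M) ≤ ρ x} ≤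
      D * ∫ x, {x | 2 ^ k * M ≤ ρ x ∧ ρ x < 2 * (2 ^ k * M)}.indicator τ x ∂(bm c r) := by
    intro k
    set s := 2 ^ k * M with hs
    have hs0 : 0 < s := by positivity
    set b : ℝ := 4 / (s * V) with hb
    have hb0 : 0 < b := by positivity
    set t : ℝ := b ^ ((d:ℝ)⁻¹) with ht
    have ht0 : 0 < t := by positivity
    have htd : t ^ d = b := by
      rw [ht]; exact Real.rpow_inv_natCast_pow hb0.le (by omega)
    have ht2 : t ^ 2 = b ^ q := by
      rw [ht, ← Real.rpow_natCast, ← Real.rpow_mul hb0.le, hq]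
      congr 1
      push_cast; field_simp
    have hth : t ≤ 1 / 2 := by
      rw [← pow_le_pow_iff_left₀ ht0.le (by norm_num) (show d ≠ 0 by omega), htd, hb, hs, hMd]
      have h1 : (1:ℝ) ≤ 2 ^ k := one_le_pow₀ (by norm_num)
      have : 4 / (2 ^ k * (4 * 2 ^ d / V) * V) = (1 / 2 ^ k) * (1 / 2) ^ d := by
        rw [one_div_pow]; field_simp
      rw [this]
      apply mul_le_of_le_one_left (by positivity)
      rw [div_le_one (by positivity)]; exact h1
    have hw := weak c r hr hL hρ hτ hρ0 hτ0 hg h2 hs0 ht0 hth (by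
      rw [hV, htd, hb]; field_simp)
    set J := ∫ x, {x | s ≤ ρ x ∧ ρ x < 2 * s}.indicator τ x ∂(bm c r)
    calc (4 * s) ^ p * (bm c r).real {x | 2 * s ≤ ρ x}
        ≤ (4 * s) ^ p * (2 * ((2 * r * t) ^ 2 * 2 ^ d) * (8 * L ^ 2 / s) * J) := by gcongr
      _ = D * J := by
        have e1 : (4 * s) ^ p = 4 ^ p * (s * s ^ q) := by
          rw [Real.mul_rpow (by norm_num) hs0.le, hp, Real.rpow_add hs0, Real.rpow_one]
        have e2 : t ^ 2 = 4 ^ q / (s ^ q * (ω ^ q * r ^ 2)) := by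
          rw [ht2, hb, Real.div_rpow (by norm_num) (by positivity),
            Real.mul_rpow hs0.le hVp.le, hVd, Real.mul_rpow hω.le (by positivity), hrq]
        have hsq : 0 < s ^ q := by positivity
        have hωq : 0 < ω ^ q := by positivity
        rw [mul_pow, e1, e2, hD, Real.rpow_neg hω.le]
        field_simp
        ring
  have hIg : ∀ k : ℕ, Integrable (fun x =>
      (4 * (2 ^ k * M)) ^ p * (if 2 * (2 ^ k * M) ≤ ρ x then (1:ℝ) else 0)) (bm c r) := by
    intro k
    apply Integrable.const_mul
    exact (integrable_const (1:ℝ)).indicator (hm2 (2 * (2 ^ k * M)))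
  have hIg2 : ∀ k : ℕ, Integrable (fun x =>
      {x | 2 ^ k * M ≤ ρ x ∧ ρ x < 2 * (2 ^ k * M)}.indicator τ x) (bm c r) := fun k =>
    (bm_int c r hτ).indicator (hm1 _)
  have step1 : ∫ x, ρ x ^ p ∂(bm c r) ≤ (2 * M) ^ q * 2 + ∑ k ∈ Finset.range K,
      (4 * (2 ^ k * M)) ^ p * (bm c r).real {x | 2 * (2 ^ k * M) ≤ ρ x} := by
    calc ∫ x, ρ x ^ p ∂(bm c r) ≤ ∫ x, ((2 * M) ^ q * ρ x + ∑ k ∈ Finset.range K,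
          (4 * (2 ^ k * M)) ^ p * (if 2 * (2 ^ k * M) ≤ ρ x then (1:ℝ) else 0)) ∂(bm c r) := by
          apply setIntegral_mono_on
          · exact bm_int c r (hρc.rpow_const (fun x => Or.inr (by positivity)))
          · exact ((bm_int c r hρc).const_mul _).add (integrable_finsetSum _ fun k _ => hIg k)
          · exact measurableSet_ball
          · intro x hx
            apply layer hM hq0.le hp (hρ0 x) K
            have := hR x (Metric.ball_subset_closedBall hx)
            rw [Real.norm_of_nonneg (hρ0 x)] at this
            linarith
      _ = _ := by
          rw [integral_add ((bm_int c r hρc).const_mul _) (integrable_finsetSum _ fun k _ => hIg k),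
            integral_const_mul, h2, integral_finsetSum _ fun k _ => hIg k]
          congr 1
          refine Finset.sum_congr rfl fun k _ => ?_
          rw [integral_const_mul]
          congr 1
          have := integral_indicator_const (μ := bm c r) (1:ℝ) (hm2 (2 * (2 ^ k * M)))
          rw [smul_eq_mul, mul_one] at this
          exact this
  have step2 : ∑ k ∈ Finset.range K,
      (4 * (2 ^ k * M)) ^ p * (bm c r).real {x | 2 * (2 ^ k * M) ≤ ρ x} ≤ D * T := by
    refine (Finset.sum_le_sum fun k _ => hwk k).trans ?_
    rw [← Finset.mul_sum, ← integral_finsetSum _ fun k _ => hIg2 k]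
    apply mul_le_mul_of_nonneg_left _ hD0
    apply integral_mono
    · exact integrable_finsetSum _ fun k _ => hIg2 k
    · exact bm_int c r hτ
    · intro x
      have := disj hM (ρ x) (τ x) (hτ0 x) K
      have h3 : (if ρ x < 2 ^ K * M then τ x else 0) ≤ τ x := by
        split_ifs
        · exact le_rfl
        · exact hτ0 x
      refine le_trans (le_of_eq ?_) (this.trans h3)
      refine Finset.sum_congr rfl fun k _ => ?_
      rw [Set.indicator_apply]
      rfl
  have step3 : (2 * M) ^ q * 2 ≤ ω ^ (-q) * (2 * (8 * 2 ^ d) ^ q * 2 ^ (d + 1)) * T := by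
    have e : (2 * M) ^ q = (8 * 2 ^ d) ^ q * ω ^ (-q) / r ^ 2 := by
      have : 2 * M = (8 * 2 ^ d) / (ω * r ^ d) := by rw [hMd, hVd]; ring
      rw [this, Real.div_rpow (by positivity) (by positivity), Real.mul_rpow hω.le (by positivity),
        hrq, Real.rpow_neg hω.le]
      field_simp
    rw [e]
    have h5 : 1 / r ^ 2 ≤ 2 ^ (d + 1) * T := by
      rw [div_le_iff₀ (by positivity)]; linarith
    have h6 : 0 ≤ (8 * 2 ^ d) ^ q * ω ^ (-q) * 2 := by positivity
    calc _ = (8 * 2 ^ d) ^ q * ω ^ (-q) * 2 * (1 / r ^ 2) := by ring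
      _ ≤ (8 * 2 ^ d) ^ q * ω ^ (-q) * 2 * (2 ^ (d + 1) * T) := by gcongr
      _ = _ := by ring
  calc _ ≤ _ := step1
    _ ≤ ω ^ (-q) * (2 * (8 * 2 ^ d) ^ q * 2 ^ (d + 1)) * T + D * T := add_le_add step3 step2
    _ = _ := by rw [hD]; ring

lemma grad_rho {d N : ℕ} {u : Fin N → EE d → ℂ} {lam : Fin N → ℝ} (hu : ∀ n, ContDiff ℝ 1 (u n))
    (hl : ∀ n, 0 ≤ lam n) (x : EE d) :
    ‖fderiv ℝ (fun x => ∑ n, lam n * ‖u n x‖ ^ 2) x‖ ^ 2 ≤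
      4 * (∑ n, lam n * ‖u n x‖ ^ 2) * ∑ n, lam n * ‖fderiv ℝ (u n) x‖ ^ 2 := by
  have hd : ∀ n, HasFDerivAt (u n) (fderiv ℝ (u n) x) x := fun n =>
    ((hu n).differentiable (by norm_num)).differentiableAt.hasFDerivAt
  have h1 : HasFDerivAt (fun x => ∑ n, lam n * ‖u n x‖ ^ 2)
      (∑ n, lam n • (2 • (innerSL ℝ (u n x)).comp (fderiv ℝ (u n) x))) x := by
    apply HasFDerivAt.fun_sum
    intro n _
    exact ((hd n).norm_sq).const_mul (lam n)
  rw [h1.fderiv]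
  have h2 : ‖∑ n, lam n • (2 • (innerSL ℝ (u n x)).comp (fderiv ℝ (u n) x))‖ ≤
      2 * ∑ n, (Real.sqrt (lam n) * ‖u n x‖) * (Real.sqrt (lam n) * ‖fderiv ℝ (u n) x‖) := by
    refine (norm_sum_le _ _).trans ?_
    rw [Finset.mul_sum]
    apply Finset.sum_le_sum
    intro n _
    rw [norm_smul, Real.norm_of_nonneg (hl n)]
    have h3 : ‖(2:ℕ) • (innerSL ℝ (u n x)).comp (fderiv ℝ (u n) x)‖ ≤
        2 * (‖u n x‖ * ‖fderiv ℝ (u n) x‖) := by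
      refine (norm_nsmul_le).trans ?_
      have := ContinuousLinearMap.opNorm_comp_le (innerSL ℝ (u n x)) (fderiv ℝ (u n) x)
      rw [innerSL_apply_norm] at this
      push_cast
      linarith
    calc _ ≤ lam n * (2 * (‖u n x‖ * ‖fderiv ℝ (u n) x‖)) := mul_le_mul_of_nonneg_left h3 (hl n)
      _ = (Real.sqrt (lam n) * Real.sqrt (lam n)) * (2 * (‖u n x‖ * ‖fderiv ℝ (u n) x‖)) := by
          rw [Real.mul_self_sqrt (hl n)]
      _ = _ := by ring
  refine (pow_le_pow_left₀ (norm_nonneg _) h2 2).trans ?_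
  have cs := Finset.sum_mul_sq_le_sq_mul_sq Finset.univ
    (fun n => Real.sqrt (lam n) * ‖u n x‖) (fun n => Real.sqrt (lam n) * ‖fderiv ℝ (u n) x‖)
  simp only [mul_pow, Real.sq_sqrt (hl _)] at cs
  rw [mul_pow]
  linarith

lemma fderiv_le_gradSq {d : ℕ} (f : EE d → ℂ) (x : EE d) : ‖fderiv ℝ f x‖ ^ 2 ≤ gradSq f x := by
  have h0 : 0 ≤ gradSq f x := Finset.sum_nonneg fun i _ => sq_nonneg _
  rw [← Real.sqrt_le_sqrt_iff h0, Real.sqrt_sq (norm_nonneg _)]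
  apply ContinuousLinearMap.opNorm_le_bound _ (Real.sqrt_nonneg _)
  intro v
  have hv : v = ∑ i, v i • EuclideanSpace.single i (1:ℝ) := by
    ext j
    simp [Finset.sum_apply, Pi.single_apply]
  apply le_of_sq_le_sq _ (by positivity)
  rw [mul_pow, Real.sq_sqrt h0]
  have h1 : ‖fderiv ℝ f x v‖ ≤ ∑ i, ‖fderiv ℝ f x (EuclideanSpace.single i 1)‖ * ‖v i‖ := by
    conv_lhs => rw [hv, map_sum]
    refine (norm_sum_le _ _).trans (Finset.sum_le_sum fun i _ => ?_)
    rw [map_smul, norm_smul, mul_comm]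
  refine (pow_le_pow_left₀ (norm_nonneg _) h1 2).trans ?_
  refine (Finset.sum_mul_sq_le_sq_mul_sq _ _ _).trans ?_
  rw [EuclideanSpace.norm_sq_eq]
  exact le_rfl

/-- **Lieb–Thirring inequality on balls**: for a finite family of `C¹` functions,
orthonormal in `L²(B)` on an open ball `B`, with coefficients `λₙ ∈ [0,1]` and
`∫_B ρ = 2`, the local kinetic energy dominates `(1/C_d) ∫_B ρ^{1+2/d}`. -/
theorem lieb_thirring_ball (d : ℕ) (hd : 1 ≤ d) :
    ∃ C : ℝ, 0 < C ∧
      ∀ (c : EuclideanSpace ℝ (Fin d)) (r : ℝ), 0 < r →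
      ∀ (N : ℕ) (u : Fin N → EuclideanSpace ℝ (Fin d) → ℂ) (lam : Fin N → ℝ),
        (∀ n, ContDiff ℝ 1 (u n)) →
        (∀ m n : Fin N,
          ∫ x in Metric.ball c r, u m x * (starRingEnd ℂ) (u n x)
            = if m = n then 1 else 0) →
        (∀ n, 0 ≤ lam n ∧ lam n ≤ 1) →
        (∫ x in Metric.ball c r, ∑ n, lam n * ‖u n x‖ ^ 2) = 2 →
        ∑ n, lam n * ∫ x in Metric.ball c r, gradSq (u n) x
          ≥ (1 / C) *
            ∫ x in Metric.ball c r, (∑ n, lam n * ‖u n x‖ ^ 2) ^ (1 + 2 / (d : ℝ)) := by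

  obtain ⟨L, _, hL⟩ := st_deriv_bound
  set ω : ℝ := (volume : Measure (EE d)).real (Metric.ball 0 1) with hωd
  have hω : 0 < ω :=
    ENNReal.toReal_pos (Metric.measure_ball_pos volume _ one_pos).ne' measure_ball_lt_top.ne
  refine ⟨ω ^ (-(2 / (d:ℝ))) * (4 ^ (1 + 2 / (d:ℝ)) * 64 * L ^ 2 * 2 ^ d * 4 ^ (2 / (d:ℝ))
        + 2 * (8 * 2 ^ d) ^ (2 / (d:ℝ)) * 2 ^ (d + 1)), by positivity, ?_⟩
  set C : ℝ := ω ^ (-(2 / (d:ℝ))) * (4 ^ (1 + 2 / (d:ℝ)) * 64 * L ^ 2 * 2 ^ d * 4 ^ (2 / (d:ℝ))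
        + 2 * (8 * 2 ^ d) ^ (2 / (d:ℝ)) * 2 ^ (d + 1)) with hCd
  have hC : 0 < C := by positivity
  intro c r hr N u lam hu ho hlam h2
  have huc : ∀ n, Continuous (u n) := fun n => (hu n).continuous
  have hudc : ∀ n, Continuous (fderiv ℝ (u n)) := fun n => (hu n).continuous_fderiv (by norm_num)
  have hV : (bm c r).real Set.univ = ω * r ^ d := by
    rw [measureReal_restrict_apply_univ, hωd, measureReal_def, measureReal_def,
      Measure.addHaar_ball_of_pos _ c hr, ENNReal.toReal_mul, ENNReal.toReal_ofReal (by positivity)]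
    simp [mul_comm]
  have hVp : 0 < (bm c r).real Set.univ := by rw [hV]; positivity
  set V := (bm c r).real Set.univ with hVd
  have hnorm : ∀ n, ∫ x, ‖u n x‖ ^ 2 ∂(bm c r) = 1 := by
    intro n
    have h := ho n n
    rw [if_pos rfl] at h
    have e : ∀ x, u n x * (starRingEnd ℂ) (u n x) = ((‖u n x‖ ^ 2 : ℝ) : ℂ) := by
      intro x
      rw [Complex.mul_conj, Complex.normSq_eq_norm_sq]
    simp_rw [e] at h
    rw [integral_complex_ofReal] at h
    exact_mod_cast h
  have hsum : ∑ n, lam n = 2 := by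
    rw [integral_finsetSum _ (fun n _ => bm_int c r (by fun_prop))] at h2
    rw [← h2]
    refine Finset.sum_congr rfl fun n _ => ?_
    rw [integral_const_mul, hnorm, mul_one]
  set ρ : EE d → ℝ := fun x => ∑ n, lam n * ‖u n x‖ ^ 2 with hρd
  set τ : EE d → ℝ := fun x => ∑ n, lam n * ‖fderiv ℝ (u n) x‖ ^ 2 with hτd
  have hρC : ContDiff ℝ 1 ρ := by
    apply ContDiff.sum
    intro n _
    exact contDiff_const.mul ((hu n).norm_sq ℝ)
  have hτc : Continuous τ := by fun_prop
  have hρ0 : ∀ x, 0 ≤ ρ x := fun x => Finset.sum_nonneg fun n _ =>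
    mul_nonneg (hlam n).1 (sq_nonneg _)
  have hτ0 : ∀ x, 0 ≤ τ x := fun x => Finset.sum_nonneg fun n _ =>
    mul_nonneg (hlam n).1 (sq_nonneg _)
  have hTe : ∫ x, τ x ∂(bm c r) = ∑ n, lam n * ∫ x, ‖fderiv ℝ (u n) x‖ ^ 2 ∂(bm c r) := by
    simp only [hτd]
    rw [integral_finsetSum _ (fun n _ => bm_int c r (by fun_prop))]
    simp_rw [integral_const_mul]
  have hT : 1 ≤ r ^ 2 * 2 ^ (d + 1) * ∫ x, τ x ∂(bm c r) := by
    have hb := bessel c r huc ho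
    have hp : ∀ n, lam n * (2 * V) - 2 * ‖∫ x, u n x ∂(bm c r)‖ ^ 2 ≤
        4 * r ^ 2 * 2 ^ d * V * (lam n * ∫ x, ‖fderiv ℝ (u n) x‖ ^ 2 ∂(bm c r)) := by
      intro n
      have h1 := poinc c r (hu n)
      rw [expand c r (huc n), hnorm, mul_one] at h1
      have h3 := mul_le_mul_of_nonneg_left h1 (hlam n).1
      have h4 := mul_le_mul_of_nonneg_right (hlam n).2 (sq_nonneg ‖∫ x, u n x ∂(bm c r)‖)
      calc _ ≤ lam n * (2 * V - 2 * ‖∫ x, u n x ∂(bm c r)‖ ^ 2) := by linarith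
        _ ≤ _ := h3
        _ = _ := by ring
    have hs := Finset.sum_le_sum (fun n (_ : n ∈ Finset.univ) => hp n)
    rw [Finset.sum_sub_distrib, ← Finset.sum_mul, ← Finset.mul_sum, ← Finset.mul_sum, hsum,
      ← hTe] at hs
    have h5 : V * 1 ≤ V * (r ^ 2 * 2 ^ (d + 1) * ∫ x, τ x ∂(bm c r)) := by
      rw [pow_succ (2:ℝ) d]; linarith
    exact le_of_mul_le_mul_left h5 hVp
  have hmain := main_est d hd c r hr hL hρC hτc hρ0 hτ0 (grad_rho hu (fun n => (hlam n).1)) h2 hω hV hT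
  rw [← hCd] at hmain
  have hfin : ∫ x, τ x ∂(bm c r) ≤ ∑ n, lam n * ∫ x in Metric.ball c r, gradSq (u n) x := by
    rw [hTe]
    apply Finset.sum_le_sum
    intro n _
    apply mul_le_mul_of_nonneg_left _ (hlam n).1
    apply integral_mono
    · exact bm_int c r (by fun_prop)
    · apply bm_int c r
      unfold gradSq
      fun_prop
    · exact fun x => fderiv_le_gradSq (u n) x
  refine ge_iff_le.2 (le_trans ?_ hfin)
  rw [one_div, inv_mul_le_iff₀ hC]
  exact hmain
end

section
/- (Hoffmann-Ostenhof inequality) Let u_1, …, u_N be continuously differentiable functions from ℝ^d to ℂ, let λ_1, …, λ_N ≥ 0, and set ρ(x) = Σ_{n=1}^N λ_n |u_n(x)|². Then for every measurable set B ⊂ ℝ^d, one has Σ_{n=1}^N λ_n ∫_B |∇u_n(x)|² dx ≥ ∫_{B ∩ {ρ > 0}} |∇ρ(x)|² / (4 ρ(x)) dx, where the right-hand side equals ∫_B |∇√ρ|² since |∇√ρ|² = |∇ρ|²/(4ρ) on the set where ρ > 0. -/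
open MeasureTheory ENNReal
open scoped BigOperators

/-- `|∇g(x)|² = Σᵢ (∂ᵢ g(x))²` for a real-valued function `g : ℝ^d → ℝ`. -/
noncomputable def gradSqR {d : ℕ} (g : EuclideanSpace ℝ (Fin d) → ℝ)
    (x : EuclideanSpace ℝ (Fin d)) : ℝ :=
  ∑ i : Fin d, (fderiv ℝ g x (EuclideanSpace.single i 1)) ^ 2

theorem gradSq_continuous {d : ℕ} (f : EuclideanSpace ℝ (Fin d) → ℂ) (hf : ContDiff ℝ 1 f) :
    Continuous (gradSq f) := by
  have h : Continuous (fderiv ℝ f) := hf.continuous_fderiv (by norm_num)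
  unfold gradSq
  fun_prop

theorem gradSqR_le {d N : ℕ} (u : Fin N → EuclideanSpace ℝ (Fin d) → ℂ) (lam : Fin N → ℝ)
    (hu : ∀ n, ContDiff ℝ 1 (u n)) (hlam : ∀ n, 0 ≤ lam n) (x : EuclideanSpace ℝ (Fin d)) :
    gradSqR (fun y => ∑ n, lam n * ‖u n y‖ ^ 2) x
      ≤ (∑ n, lam n * gradSq (u n) x) * (4 * ∑ n, lam n * ‖u n x‖ ^ 2) := by
  have hd : ∀ v, fderiv ℝ (fun y => ∑ n, lam n * ‖u n y‖ ^ 2) x v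
      = ∑ n, lam n * (2 * inner ℝ (u n x) (fderiv ℝ (u n) x v)) := by
    intro v
    have h1 : ∀ n, HasFDerivAt (u n) (fderiv ℝ (u n) x) x := fun n =>
      ((hu n).differentiable (by norm_num) x).hasFDerivAt
    have h2 := HasFDerivAt.fun_sum (u := Finset.univ)
      (fun n _ => ((h1 n).norm_sq).const_mul (lam n))
    rw [h2.fderiv]
    simp [mul_add]
  have key : ∀ v, (fderiv ℝ (fun y => ∑ n, lam n * ‖u n y‖ ^ 2) x v) ^ 2
      ≤ (∑ n, lam n * ‖fderiv ℝ (u n) x v‖ ^ 2) * (4 * ∑ n, lam n * ‖u n x‖ ^ 2) := by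
    intro v
    rw [hd]
    have cs := Finset.sum_sq_le_sum_mul_sum_of_sq_le_mul Finset.univ
      (r := fun n => lam n * (‖fderiv ℝ (u n) x v‖ * ‖u n x‖))
      (f := fun n => lam n * ‖fderiv ℝ (u n) x v‖ ^ 2) (g := fun n => lam n * ‖u n x‖ ^ 2)
      (fun n _ => mul_nonneg (hlam n) (sq_nonneg _))
      (fun n _ => mul_nonneg (hlam n) (sq_nonneg _))
      (fun n _ => le_of_eq (by ring))
    have hab : |∑ n, lam n * (2 * inner ℝ (u n x) (fderiv ℝ (u n) x v))|
        ≤ 2 * ∑ n, lam n * (‖fderiv ℝ (u n) x v‖ * ‖u n x‖) := by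
      refine (Finset.abs_sum_le_sum_abs _ _).trans ?_
      rw [Finset.mul_sum]
      refine Finset.sum_le_sum fun n _ => ?_
      rw [abs_mul, abs_mul, abs_of_nonneg (hlam n), abs_two]
      have h3 := mul_le_mul_of_nonneg_left
        (abs_real_inner_le_norm (u n x) (fderiv ℝ (u n) x v)) (hlam n)
      linarith
    have h4 := pow_le_pow_left₀ (abs_nonneg _) hab 2
    rw [sq_abs] at h4
    linarith
  unfold gradSqR gradSq
  refine (Finset.sum_le_sum fun i _ => key _).trans (le_of_eq ?_)
  rw [← Finset.sum_mul, Finset.sum_comm]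
  simp only [Finset.mul_sum]

/-- **Hoffmann-Ostenhof inequality**: with `ρ = Σₙ λₙ |uₙ|²`, the kinetic energy on any
measurable set `B` dominates `∫_{B ∩ {ρ>0}} |∇ρ|²/(4ρ)`, i.e. `∫_B |∇√ρ|²`.
Both sides are interpreted in `[0,∞]`. -/
theorem hoffmann_ostenhof (d : ℕ) (hd : 1 ≤ d)
    (N : ℕ) (u : Fin N → EuclideanSpace ℝ (Fin d) → ℂ) (lam : Fin N → ℝ)
    (hu : ∀ n, ContDiff ℝ 1 (u n)) (hlam : ∀ n, 0 ≤ lam n)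
    (B : Set (EuclideanSpace ℝ (Fin d))) (hB : MeasurableSet B) :
    ∫⁻ x in B ∩ {x | 0 < ∑ n, lam n * ‖u n x‖ ^ 2},
        ENNReal.ofReal
          (gradSqR (fun y => ∑ n, lam n * ‖u n y‖ ^ 2) x /
            (4 * ∑ n, lam n * ‖u n x‖ ^ 2))
      ≤ ∑ n, ENNReal.ofReal (lam n) * ∫⁻ x in B, ENNReal.ofReal (gradSq (u n) x) := by
  have hm : ∀ n, Measurable fun x => ENNReal.ofReal (gradSq (u n) x) := fun n =>
    (gradSq_continuous (u n) (hu n)).measurable.ennreal_ofReal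
  have hnn : ∀ n x, 0 ≤ gradSq (u n) x := fun n x => Finset.sum_nonneg fun i _ => sq_nonneg _
  have hS : MeasurableSet {x | 0 < ∑ n, lam n * ‖u n x‖ ^ 2} := by
    have hc : ∀ n, Continuous (u n) := fun n => (hu n).continuous
    exact (isOpen_lt continuous_const (by fun_prop)).measurableSet
  calc _ ≤ ∫⁻ x in B ∩ {x | 0 < ∑ n, lam n * ‖u n x‖ ^ 2},
        ∑ n, ENNReal.ofReal (lam n) * ENNReal.ofReal (gradSq (u n) x) := by
        refine setLIntegral_mono' (hB.inter hS) fun x hx => ?_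
        have hpos : 0 < ∑ n, lam n * ‖u n x‖ ^ 2 := hx.2
        simp only [← ENNReal.ofReal_mul (hlam _)]
        rw [← ENNReal.ofReal_sum_of_nonneg fun n _ => mul_nonneg (hlam n) (hnn n x)]
        refine ENNReal.ofReal_le_ofReal ?_
        rw [div_le_iff₀ (by linarith)]
        exact gradSqR_le u lam hu hlam x
    _ ≤ ∫⁻ x in B, ∑ n, ENNReal.ofReal (lam n) * ENNReal.ofReal (gradSq (u n) x) :=
        lintegral_mono_set Set.inter_subset_left
    _ = _ := by
        rw [lintegral_finsetSum _ fun n _ => (hm n).const_mul _]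
        exact Finset.sum_congr rfl fun n _ => lintegral_const_mul _ (hm n)
end

section
/- (Convexity of the gradient, two functions) Let v_1, v_2 : ℝ^d → ℂ be differentiable at a point x ∈ ℝ^d with |v_1(x)|² + |v_2(x)|² > 0, and let f(y) = √(|v_1(y)|² + |v_2(y)|²). Then f is differentiable at x and |∇v_1(x)|² + |∇v_2(x)|² ≥ |∇f(x)|². -/
open scoped BigOperators

/-- **Convexity of the gradient (two functions)**: if `v₁, v₂` are differentiable at `x`
and `|v₁(x)|² + |v₂(x)|² > 0`, then `f = √(|v₁|² + |v₂|²)` is differentiable at `x` and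
`|∇v₁(x)|² + |∇v₂(x)|² ≥ |∇f(x)|²`. -/
theorem gradient_convexity_two (d : ℕ) (hd : 1 ≤ d)
    (v₁ v₂ : EuclideanSpace ℝ (Fin d) → ℂ) (x : EuclideanSpace ℝ (Fin d))
    (h₁ : DifferentiableAt ℝ v₁ x) (h₂ : DifferentiableAt ℝ v₂ x)
    (hpos : 0 < ‖v₁ x‖ ^ 2 + ‖v₂ x‖ ^ 2) :
    DifferentiableAt ℝ (fun y => Real.sqrt (‖v₁ y‖ ^ 2 + ‖v₂ y‖ ^ 2)) x ∧
      gradSqR (fun y => Real.sqrt (‖v₁ y‖ ^ 2 + ‖v₂ y‖ ^ 2)) x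
        ≤ gradSq v₁ x + gradSq v₂ x := by
  have H := (h₁.hasFDerivAt.norm_sq.add h₂.hasFDerivAt.norm_sq).sqrt hpos.ne'
  have H' : HasFDerivAt (fun y => Real.sqrt (‖v₁ y‖ ^ 2 + ‖v₂ y‖ ^ 2)) _ x := H
  refine ⟨H'.differentiableAt, ?_⟩
  unfold gradSqR gradSq
  rw [H'.fderiv, ← Finset.sum_add_distrib]
  refine Finset.sum_le_sum fun i _ => ?_
  generalize EuclideanSpace.single i (1 : ℝ) = e
  have c1 := abs_le.1 (abs_real_inner_le_norm (v₁ x) (fderiv ℝ v₁ x e))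
  have c2 := abs_le.1 (abs_real_inner_le_norm (v₂ x) (fderiv ℝ v₂ x e))
  have hs := Real.sq_sqrt hpos.le
  have hs0 := Real.sqrt_pos.2 hpos
  simp only [Pi.add_apply, ContinuousLinearMap.smul_apply, ContinuousLinearMap.add_apply,
    ContinuousLinearMap.comp_apply, innerSL_apply_apply, smul_eq_mul, nsmul_eq_mul]
  generalize fderiv ℝ v₁ x e = a at *
  generalize fderiv ℝ v₂ x e = b at *
  generalize Real.sqrt (‖v₁ x‖ ^ 2 + ‖v₂ x‖ ^ 2) = s at *
  generalize inner ℝ (v₁ x) a = p at *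
  generalize inner ℝ (v₂ x) b = q at *
  have key : (p + q) ^ 2 ≤ (‖a‖ ^ 2 + ‖b‖ ^ 2) * s ^ 2 := by
    rw [hs]
    have : (p + q) ^ 2 ≤ (‖v₁ x‖ * ‖a‖ + ‖v₂ x‖ * ‖b‖) ^ 2 := by
      apply sq_le_sq'
      · linarith [c1.1, c2.1]
      · linarith [c1.2, c2.2]
    nlinarith [sq_nonneg (‖v₁ x‖ * ‖b‖ - ‖v₂ x‖ * ‖a‖)]
  have e1 : (1 / (2 * s) * (2 * p + 2 * q)) ^ 2 = (p + q) ^ 2 / s ^ 2 := by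
    field_simp
  have := (div_le_iff₀ (by positivity : 0 < s ^ 2)).2 key
  rw [← e1] at this
  simpa using this
end

section
/- (Convexity of the gradient, finite families) Let v_1, …, v_N : ℝ^d → ℂ be differentiable at a point x ∈ ℝ^d with Σ_{n=1}^N |v_n(x)|² > 0, and let f(y) = √(Σ_{n=1}^N |v_n(y)|²). Then f is differentiable at x and Σ_{n=1}^N |∇v_n(x)|² ≥ |∇f(x)|². -/
open scoped BigOperators

/-- **Convexity of the gradient (finite families)**: if `v₁, …, v_N` are differentiable
at `x` and `Σₙ |vₙ(x)|² > 0`, then `f = √(Σₙ |vₙ|²)` is differentiable at `x` and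
`Σₙ |∇vₙ(x)|² ≥ |∇f(x)|²`. -/
theorem gradient_convexity_finite (d : ℕ) (hd : 1 ≤ d) (N : ℕ)
    (v : Fin N → EuclideanSpace ℝ (Fin d) → ℂ) (x : EuclideanSpace ℝ (Fin d))
    (hdiff : ∀ n, DifferentiableAt ℝ (v n) x)
    (hpos : 0 < ∑ n, ‖v n x‖ ^ 2) :
    DifferentiableAt ℝ (fun y => Real.sqrt (∑ n, ‖v n y‖ ^ 2)) x ∧
      gradSqR (fun y => Real.sqrt (∑ n, ‖v n y‖ ^ 2)) x ≤ ∑ n, gradSq (v n) x := by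
  have hS : HasFDerivAt (fun y => ∑ n, ‖v n y‖ ^ 2)
      (∑ n, 2 • (innerSL ℝ (v n x)).comp (fderiv ℝ (v n) x)) x :=
    HasFDerivAt.fun_sum fun n _ => (hdiff n).hasFDerivAt.norm_sq
  have hf := hS.sqrt hpos.ne'
  refine ⟨hf.differentiableAt, ?_⟩
  unfold gradSqR gradSq
  rw [hf.fderiv, Finset.sum_comm]
  refine Finset.sum_le_sum fun i _ => ?_
  set e : EuclideanSpace ℝ (Fin d) := EuclideanSpace.single i 1
  set S := ∑ n, ‖v n x‖ ^ 2 with hSdef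
  have hsq : Real.sqrt S ^ 2 = S := Real.sq_sqrt hpos.le
  have hs0 : 0 < Real.sqrt S := Real.sqrt_pos.2 hpos
  have hval : ((1 / (2 * Real.sqrt S)) •
      ∑ n, 2 • (innerSL ℝ (v n x)).comp (fderiv ℝ (v n) x)) e
      = (∑ n, inner ℝ (v n x) (fderiv ℝ (v n) x e)) / Real.sqrt S := by
    simp only [ContinuousLinearMap.smul_apply, ContinuousLinearMap.sum_apply,
      ContinuousLinearMap.comp_apply, innerSL_apply_apply, smul_eq_mul, nsmul_eq_mul,
      ← Finset.mul_sum]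
    push_cast
    field_simp
  rw [hval, div_pow, hsq, div_le_iff₀ hpos]
  have h1 : |∑ n, inner ℝ (v n x) (fderiv ℝ (v n) x e)|
      ≤ ∑ n, ‖v n x‖ * ‖fderiv ℝ (v n) x e‖ :=
    (Finset.abs_sum_le_sum_abs _ _).trans
      (Finset.sum_le_sum fun n _ => abs_real_inner_le_norm _ _)
  calc (∑ n, inner ℝ (v n x) (fderiv ℝ (v n) x e)) ^ 2
      = |∑ n, inner ℝ (v n x) (fderiv ℝ (v n) x e)| ^ 2 := (sq_abs _).symm
    _ ≤ (∑ n, ‖v n x‖ * ‖fderiv ℝ (v n) x e‖) ^ 2 := by gcongr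
    _ ≤ S * ∑ n, ‖fderiv ℝ (v n) x e‖ ^ 2 := Finset.sum_mul_sq_le_sq_mul_sq _ _ _
    _ = _ := mul_comm _ _
end

section
/- (Local uncertainty principle) There exists a constant C_d > 0 depending only on the dimension d such that for every open ball B ⊂ ℝ^d and every continuously differentiable function g : ℝ^d → ℂ with ∫_B |g|² > 0, one has ∫_B |∇g(x)|² dx ≥ (1/C_d) · (∫_B |g(x)|^{2(1+2/d)} dx) / (∫_B |g(x)|² dx)^{2/d} − C_d |B|^{−2/d} ∫_B |g(x)|² dx, where |B| denotes the Lebesgue measure of B. -/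
open MeasureTheory
open scoped BigOperators

open scoped ENNReal

lemma lu_jensen {α : Type*} [MeasurableSpace α] (ν : Measure α) [IsProbabilityMeasure ν]
    (f : α → ℝ≥0∞) (hf : Measurable f) (q : ℝ) (hq : 1 ≤ q) :
    (∫⁻ a, f a ∂ν) ^ q ≤ ∫⁻ a, f a ^ q ∂ν := by
  have h := eLpNorm'_le_eLpNorm'_of_exponent_le (μ := ν) (f := f) one_pos hq
    hf.aestronglyMeasurable
  simp only [eLpNorm', enorm_eq_self, ENNReal.rpow_one, one_div, inv_one] at h
  calc _ ≤ ((∫⁻ a, f a ^ q ∂ν) ^ q⁻¹) ^ q := ENNReal.rpow_le_rpow h (by linarith)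
    _ = _ := by rw [← ENNReal.rpow_mul, inv_mul_cancel₀ (by linarith), ENNReal.rpow_one]

lemma lu_scale {d : ℕ} (H : EuclideanSpace ℝ (Fin d) → ℝ≥0∞) (hH : Measurable H)
    (a : EuclideanSpace ℝ (Fin d)) (σ : ℝ) (hσ : 0 < σ) :
    ∫⁻ y, H (a + σ • y) = ENNReal.ofReal ((σ ^ d)⁻¹) * ∫⁻ z, H z := by
  have h1 : ∫⁻ y, H (a + σ • y) = ∫⁻ z, H (a + z) ∂(Measure.map (σ • ·) volume) := by
    rw [lintegral_map (by fun_prop) (by fun_prop)]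
  rw [h1, Measure.map_addHaar_smul _ hσ.ne', lintegral_smul_measure,
    lintegral_add_left_eq_self H a, abs_of_pos (by positivity)]
  simp

lemma lu_avg {d : ℕ} (hd : 1 ≤ d) (H : EuclideanSpace ℝ (Fin d) → ℝ≥0∞) (hH : Measurable H)
    (ν : Measure (EuclideanSpace ℝ (Fin d))) [IsProbabilityMeasure ν] (κ : ℝ≥0∞)
    (hν : ν ≤ κ • volume) (σ : ℝ) (hσ : 0 < σ) (hσ2 : σ ≤ 1 / 2) :
    ∫⁻ x, (∫⁻ y, H (x + σ • (y - x)) ∂ν) ^ (2 * (1 + 2 / (d : ℝ)))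
      ≤ (κ * ENNReal.ofReal ((σ ^ d)⁻¹) * ∫⁻ z, H z ^ (2 : ℝ)) ^ (2 / (d : ℝ)) *
        (ENNReal.ofReal (2 ^ d) * ∫⁻ z, H z ^ (2 : ℝ)) := by
  have hd0 : (0 : ℝ) < d := by exact_mod_cast hd
  set N := ∫⁻ z, H z ^ (2 : ℝ)
  have hJ : ∀ x, (∫⁻ y, H (x + σ • (y - x)) ∂ν) ^ (2 : ℝ)
      ≤ ∫⁻ y, H (x + σ • (y - x)) ^ (2 : ℝ) ∂ν := fun x =>
    lu_jensen ν _ (by fun_prop) 2 (by norm_num)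
  have hK : ∀ x, ∫⁻ y, H (x + σ • (y - x)) ^ (2 : ℝ) ∂ν
      ≤ κ * ENNReal.ofReal ((σ ^ d)⁻¹) * N := by
    intro x
    calc _ ≤ ∫⁻ y, H (x + σ • (y - x)) ^ (2 : ℝ) ∂(κ • volume) := lintegral_mono' hν le_rfl
      _ = κ * ∫⁻ y, H ((x - σ • x) + σ • y) ^ (2 : ℝ) := by
        rw [lintegral_smul_measure, smul_eq_mul]
        congr 2 with y
        congr 2
        rw [smul_sub]; abel
      _ = _ := by
        rw [lu_scale (fun z => H z ^ (2 : ℝ)) (by fun_prop) _ σ hσ, mul_assoc]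
  have hP : ∀ x, (∫⁻ y, H (x + σ • (y - x)) ∂ν) ^ (2 * (1 + 2 / (d : ℝ)))
      ≤ (κ * ENNReal.ofReal ((σ ^ d)⁻¹) * N) ^ (2 / (d : ℝ)) *
        ∫⁻ y, H (x + σ • (y - x)) ^ (2 : ℝ) ∂ν := by
    intro x
    rw [ENNReal.rpow_mul, add_comm, ENNReal.rpow_add_of_nonneg _ _ (by positivity) zero_le_one,
      ENNReal.rpow_one]
    gcongr
    · exact (hJ x).trans (hK x)
    · exact hJ x
  calc _ ≤ ∫⁻ x, (κ * ENNReal.ofReal ((σ ^ d)⁻¹) * N) ^ (2 / (d : ℝ)) *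
        ∫⁻ y, H (x + σ • (y - x)) ^ (2 : ℝ) ∂ν := lintegral_mono hP
    _ = (κ * ENNReal.ofReal ((σ ^ d)⁻¹) * N) ^ (2 / (d : ℝ)) *
        ∫⁻ x, ∫⁻ y, H (x + σ • (y - x)) ^ (2 : ℝ) ∂ν := by
      rw [lintegral_const_mul]
      exact Measurable.lintegral_prod_right (by fun_prop)
    _ ≤ _ := by
      gcongr
      rw [lintegral_lintegral_swap (Measurable.aemeasurable (by fun_prop))]
      calc _ ≤ ∫⁻ y, ENNReal.ofReal (2 ^ d) * N ∂ν := by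
            refine lintegral_mono fun y => ?_
            have : ∀ x, H (x + σ • (y - x)) ^ (2 : ℝ) = H (σ • y + (1 - σ) • x) ^ (2 : ℝ) := by
              intro x
              congr 2
              rw [smul_sub, sub_smul, one_smul]; abel
            simp_rw [this]
            rw [lu_scale (fun z => H z ^ (2 : ℝ)) (by fun_prop) _ (1 - σ) (by linarith)]
            gcongr
            rw [← inv_pow]
            gcongr
            · exact inv_nonneg.2 (by linarith)
            · rw [inv_le_comm₀ (by linarith) (by norm_num)]; linarith
        _ = _ := by simp

lemma lu_ftc {d : ℕ} (g : EuclideanSpace ℝ (Fin d) → ℂ) (hg : ContDiff ℝ 1 g)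
    (x y : EuclideanSpace ℝ (Fin d)) (τ R : ℝ) (hτ : 0 < τ) (hxy : ‖y - x‖ ≤ R) :
    ‖g x‖ₑ ≤ ‖g (x + τ • (y - x))‖ₑ + ∫⁻ u in Set.Ioc (0 : ℝ) 1,
      ENNReal.ofReal (R * (d + 1) * τ) * (ENNReal.ofReal (u ^ d) *
        ‖fderiv ℝ g (x + (τ * u ^ (d + 1)) • (y - x))‖ₑ) := by
  have hdiff : Differentiable ℝ g := hg.differentiable (by norm_num)
  have hcont : Continuous (fderiv ℝ g) := hg.continuous_fderiv (by norm_num)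
  have hder : ∀ u : ℝ, HasDerivAt (fun u : ℝ => g (x + (τ * u ^ (d + 1)) • (y - x)))
      (fderiv ℝ g (x + (τ * u ^ (d + 1)) • (y - x))
        ((τ * ((d + 1 : ℕ) * u ^ d)) • (y - x))) u := by
    intro u
    have h1 : HasDerivAt (fun u : ℝ => τ * u ^ (d + 1)) (τ * ((d + 1 : ℕ) * u ^ d)) u := by
      simpa using (hasDerivAt_pow (d + 1) u).const_mul τ
    have h2 := (h1.smul_const (y - x)).const_add x
    exact (hdiff _).hasFDerivAt.comp_hasDerivAt u h2
  have hF := intervalIntegral.integral_eq_sub_of_hasDerivAt (a := 0) (b := 1)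
    (fun u _ => hder u) (Continuous.intervalIntegrable (by fun_prop) _ _)
  have hgx : g x = g (x + τ • (y - x)) - ∫ u in (0 : ℝ)..1,
      (fderiv ℝ g (x + (τ * u ^ (d + 1)) • (y - x))
        ((τ * ((d + 1 : ℕ) * u ^ d)) • (y - x))) := by
    rw [hF]; simp
  rw [hgx]
  refine (enorm_sub_le).trans ?_
  gcongr
  rw [intervalIntegral.integral_of_le zero_le_one]
  refine (enorm_integral_le_lintegral_enorm _).trans ?_
  refine setLIntegral_mono' measurableSet_Ioc fun u hu => ?_
  rw [← ofReal_norm, ← ofReal_norm, ← ENNReal.ofReal_mul (pow_nonneg hu.1.le _),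
    ← ENNReal.ofReal_mul (by have := (norm_nonneg _).trans hxy; positivity)]
  apply ENNReal.ofReal_le_ofReal
  refine (ContinuousLinearMap.le_opNorm _ _).trans ?_
  rw [norm_smul, Real.norm_of_nonneg (by have := hu.1; positivity)]
  push_cast
  have hu0 := hu.1
  calc _ ≤ ‖fderiv ℝ g (x + (τ * u ^ (d + 1)) • (y - x))‖ * (τ * ((d + 1) * u ^ d) * R) := by
        gcongr
    _ = _ := by ring

lemma lu_power (d : ℕ) (hd : 1 ≤ d) (u : ℝ) (hu : 0 < u) (hu1 : u ≤ 1) :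
    ENNReal.ofReal (u ^ d) ^ (2 * (1 + 2 / (d : ℝ))) *
      ENNReal.ofReal (((u ^ (d + 1)) ^ d)⁻¹) ^ (2 / (d : ℝ)) ≤ 1 := by
  have hd0 : (0 : ℝ) < d := by exact_mod_cast hd
  rw [ENNReal.ofReal_rpow_of_pos (by positivity), ENNReal.ofReal_rpow_of_pos (by positivity),
    ← ENNReal.ofReal_mul (by positivity), ENNReal.ofReal_le_one]
  have h1 : (u ^ d) ^ (2 * (1 + 2 / (d : ℝ))) = u ^ (2 * (d : ℝ) + 4) := by
    rw [← Real.rpow_natCast, ← Real.rpow_mul hu.le]; congr 1; field_simp; ring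
  have h2 : (((u ^ (d + 1)) ^ d)⁻¹) ^ (2 / (d : ℝ)) = u ^ (-(2 * (d : ℝ) + 2)) := by
    rw [← pow_mul, ← Real.rpow_natCast, ← Real.rpow_neg hu.le, ← Real.rpow_mul hu.le]
    congr 1; push_cast; field_simp
  rw [h1, h2, ← Real.rpow_add hu]
  exact Real.rpow_le_one hu.le hu1 (by linarith)

set_option maxHeartbeats 1000000 in
lemma lu_main {d : ℕ} (hd : 1 ≤ d) (c : EuclideanSpace ℝ (Fin d)) (r : ℝ) (hr : 0 < r)
    (g : EuclideanSpace ℝ (Fin d) → ℂ) (hg : ContDiff ℝ 1 g) (τ : ℝ) (hτ : 0 < τ)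
    (hτ2 : τ ≤ 1 / 2) (N D κ : ℝ≥0∞)
    (hκ : κ = (volume (Metric.ball c r))⁻¹)
    (hN : N = ∫⁻ x in Metric.ball c r, ‖g x‖ₑ ^ (2 : ℝ))
    (hD : D = ∫⁻ x in Metric.ball c r, ‖fderiv ℝ g x‖ₑ ^ (2 : ℝ)) :
    ∫⁻ x in Metric.ball c r, ‖g x‖ₑ ^ (2 * (1 + 2 / (d : ℝ))) ≤
      2 ^ (2 * (1 + 2 / (d : ℝ)) - 1) *
      ((κ * ENNReal.ofReal ((τ ^ d)⁻¹) * N) ^ (2 / (d : ℝ)) * (ENNReal.ofReal (2 ^ d) * N) +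
      ENNReal.ofReal (2 * r * (d + 1) * τ) ^ (2 * (1 + 2 / (d : ℝ))) *
      ((κ * ENNReal.ofReal ((τ ^ d)⁻¹) * D) ^ (2 / (d : ℝ)) * (ENNReal.ofReal (2 ^ d) * D))) := by
  have hd0 : (0 : ℝ) < d := by exact_mod_cast hd
  set q : ℝ := 2 * (1 + 2 / (d : ℝ)) with hq
  have hq1 : 1 ≤ q := by
    have : 0 < 2 / (d : ℝ) := by positivity
    rw [hq]; linarith
  have hq0 : 0 ≤ q := by linarith
  set B := Metric.ball c r with hB
  have hBm : MeasurableSet B := measurableSet_ball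
  have hV0 : volume B ≠ 0 := (Metric.measure_ball_pos volume c hr).ne'
  have hVt : volume B ≠ ∞ := measure_ball_lt_top.ne
  obtain ⟨ν, hνdef⟩ : ∃ ν : Measure (EuclideanSpace ℝ (Fin d)), ν = κ • volume.restrict B := ⟨_, rfl⟩
  have hνp : IsProbabilityMeasure ν := ⟨by
    simp [hνdef, hκ, ENNReal.inv_mul_cancel hV0 hVt]⟩
  have hνle : ν ≤ κ • volume := by
    refine Measure.le_iff.2 fun s hs => ?_
    simp only [hνdef, Measure.smul_apply]
    gcongr
    exact Measure.restrict_le_self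
  have hgc : Continuous g := hg.continuous
  have hfc : Continuous (fderiv ℝ g) := hg.continuous_fderiv (by norm_num)
  obtain ⟨G, hGdef⟩ : ∃ G : EuclideanSpace ℝ (Fin d) → ℝ≥0∞, G = B.indicator fun z => ‖g z‖ₑ := ⟨_, rfl⟩
  obtain ⟨h, hhdef⟩ : ∃ h : EuclideanSpace ℝ (Fin d) → ℝ≥0∞, h = B.indicator fun z => ‖fderiv ℝ g z‖ₑ := ⟨_, rfl⟩
  have hGm : Measurable G := hGdef ▸ (hgc.enorm.measurable).indicator hBm
  have hhm : Measurable h := hhdef ▸ (hfc.enorm.measurable).indicator hBm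
  have hGN : ∫⁻ z, G z ^ (2 : ℝ) = N := by
    rw [hN, ← lintegral_indicator hBm]
    congr 1 with z
    by_cases hz : z ∈ B <;> simp [hGdef, hz]
  have hhD : ∫⁻ z, h z ^ (2 : ℝ) = D := by
    rw [hD, ← lintegral_indicator hBm]
    congr 1 with z
    by_cases hz : z ∈ B <;> simp [hhdef, hz]
  have hmem : ∀ x ∈ B, ∀ y ∈ B, ∀ σ : ℝ, 0 ≤ σ → σ ≤ 1 → x + σ • (y - x) ∈ B := by
    intro x hx y hy σ h0 h1
    exact (convex_ball c r).add_smul_sub_mem hx hy ⟨h0, h1⟩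
  set M := ENNReal.ofReal (2 * r * (d + 1) * τ) with hM
  -- pointwise bound
  have hpt : ∀ x ∈ B, ‖g x‖ₑ ≤ (∫⁻ y, G (x + τ • (y - x)) ∂ν) +
      ∫⁻ u in Set.Ioc (0 : ℝ) 1, M * (ENNReal.ofReal (u ^ d) *
        ∫⁻ y, h (x + (τ * u ^ (d + 1)) • (y - x)) ∂ν) := by
    intro x hx
    have hνB : ∀ᵐ y ∂ν, y ∈ B := by
      rw [hνdef]
      refine Measure.ae_smul_measure ?_ κ
      exact ae_restrict_mem hBm
    calc ‖g x‖ₑ = ∫⁻ y, ‖g x‖ₑ ∂ν := by simp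
      _ ≤ ∫⁻ y, (G (x + τ • (y - x)) + ∫⁻ u in Set.Ioc (0 : ℝ) 1,
            M * (ENNReal.ofReal (u ^ d) * h (x + (τ * u ^ (d + 1)) • (y - x)))) ∂ν := by
        refine lintegral_mono_ae (hνB.mono fun y hy => ?_)
        have hxy : ‖y - x‖ ≤ 2 * r := by
          have h1 : dist y c < r := hy
          have h2 : dist x c < r := hx
          rw [← dist_eq_norm]
          linarith [dist_triangle_right y x c]
        refine (lu_ftc g hg x y τ (2 * r) hτ hxy).trans ?_
        have e1 : G (x + τ • (y - x)) = ‖g (x + τ • (y - x))‖ₑ := by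
          rw [hGdef]
          exact Set.indicator_of_mem (hmem x hx y hy τ hτ.le (by linarith)) _
        rw [e1]
        refine add_le_add le_rfl ?_
        refine setLIntegral_mono' (measurableSet_Ioc (a := (0 : ℝ)) (b := 1)) fun u hu => ?_
        have hu0 := hu.1
        have e2 : h (x + (τ * u ^ (d + 1)) • (y - x))
            = ‖fderiv ℝ g (x + (τ * u ^ (d + 1)) • (y - x))‖ₑ := by
          rw [hhdef]
          exact Set.indicator_of_mem (hmem x hx y hy _ (by positivity)
            (mul_le_one₀ (by linarith) (by positivity) (pow_le_one₀ hu0.le hu.2))) _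
        rw [e2]
      _ = _ := by
        rw [lintegral_add_left (by fun_prop),
          lintegral_lintegral_swap (Measurable.aemeasurable (by fun_prop))]
        congr 2 with u
        rw [lintegral_const_mul _ (by fun_prop), lintegral_const_mul _ (by fun_prop)]
  have hGavg := lu_avg hd G hGm ν κ hνle τ hτ hτ2
  rw [hGN] at hGavg
  have hprob : IsProbabilityMeasure (volume.restrict (Set.Ioc (0 : ℝ) 1)) := ⟨by simp⟩
  have hAm : Measurable (fun p : EuclideanSpace ℝ (Fin d) × ℝ =>
      ∫⁻ y, h (p.1 + (τ * p.2 ^ (d + 1)) • (y - p.1)) ∂ν) :=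
    Measurable.lintegral_prod_right (by fun_prop)
  have hAGm : Measurable (fun x : EuclideanSpace ℝ (Fin d) =>
      ∫⁻ y, G (x + τ • (y - x)) ∂ν) :=
    Measurable.lintegral_prod_right (by fun_prop)
  have hAu : ∀ x, Measurable (fun u : ℝ =>
      ∫⁻ y, h (x + (τ * u ^ (d + 1)) • (y - x)) ∂ν) := fun x =>
    hAm.comp (measurable_const.prodMk measurable_id)
  have hAx : ∀ u : ℝ, Measurable (fun x : EuclideanSpace ℝ (Fin d) =>
      ∫⁻ y, h (x + (τ * u ^ (d + 1)) • (y - x)) ∂ν) := fun u =>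
    hAm.comp (measurable_id.prodMk measurable_const)
  have hsecond : ∫⁻ x, (∫⁻ u in Set.Ioc (0 : ℝ) 1, M * (ENNReal.ofReal (u ^ d) *
        ∫⁻ y, h (x + (τ * u ^ (d + 1)) • (y - x)) ∂ν)) ^ q ≤
      M ^ q * ((κ * ENNReal.ofReal ((τ ^ d)⁻¹) * D) ^ (2 / (d : ℝ)) *
        (ENNReal.ofReal (2 ^ d) * D)) := by
    calc _ ≤ ∫⁻ x, ∫⁻ u in Set.Ioc (0 : ℝ) 1, (M * (ENNReal.ofReal (u ^ d) *
        ∫⁻ y, h (x + (τ * u ^ (d + 1)) • (y - x)) ∂ν)) ^ q := by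
          refine lintegral_mono fun x => ?_
          refine lu_jensen _ _ ?_ q hq1
          have := hAu x
          fun_prop
      _ = ∫⁻ u in Set.Ioc (0 : ℝ) 1, ∫⁻ x, (M * (ENNReal.ofReal (u ^ d) *
        ∫⁻ y, h (x + (τ * u ^ (d + 1)) • (y - x)) ∂ν)) ^ q := by
          refine lintegral_lintegral_swap (Measurable.aemeasurable ?_)
          have h1 : Measurable (fun p : EuclideanSpace ℝ (Fin d) × ℝ =>
            ENNReal.ofReal (p.2 ^ d)) := by fun_prop
          exact ((h1.mul hAm).const_mul M).pow_const q
      _ ≤ ∫⁻ u in Set.Ioc (0 : ℝ) 1, M ^ q * ((κ * ENNReal.ofReal ((τ ^ d)⁻¹) * D) ^ (2 / (d : ℝ)) *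
        (ENNReal.ofReal (2 ^ d) * D)) := by
          refine setLIntegral_mono' (measurableSet_Ioc (a := (0 : ℝ)) (b := 1)) fun u hu => ?_
          have hu0 := hu.1
          have hσ : 0 < τ * u ^ (d + 1) := by positivity
          have hσ2 : τ * u ^ (d + 1) ≤ 1 / 2 :=
            (mul_le_of_le_one_right hτ.le (pow_le_one₀ hu0.le hu.2)).trans hτ2
          have hav := lu_avg hd h hhm ν κ hνle _ hσ hσ2
          rw [hhD] at hav
          simp_rw [ENNReal.mul_rpow_of_nonneg _ _ hq0]
          have := hAx u
          rw [lintegral_const_mul _ (by fun_prop), lintegral_const_mul _ (by fun_prop)]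
          refine mul_le_mul_right ?_ _
          refine (mul_le_mul_right hav _).trans ?_
          have hsplit : ENNReal.ofReal (((τ * u ^ (d + 1)) ^ d)⁻¹) =
              ENNReal.ofReal ((τ ^ d)⁻¹) * ENNReal.ofReal (((u ^ (d + 1)) ^ d)⁻¹) := by
            rw [← ENNReal.ofReal_mul (by positivity), mul_pow, mul_inv]
          have hre : κ * (ENNReal.ofReal ((τ ^ d)⁻¹) * ENNReal.ofReal (((u ^ (d + 1)) ^ d)⁻¹)) * D
            = ENNReal.ofReal (((u ^ (d + 1)) ^ d)⁻¹) * (κ * ENNReal.ofReal ((τ ^ d)⁻¹) * D) := by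
            ring
          rw [hsplit, hre, ENNReal.mul_rpow_of_nonneg _ _ (by positivity : 0 ≤ 2 / (d : ℝ)),
            mul_assoc, ← mul_assoc]
          exact mul_le_of_le_one_left' (lu_power d hd u hu0 hu.2)
      _ = _ := by simp
  calc _ ≤ ∫⁻ x in B, 2 ^ (q - 1) * ((∫⁻ y, G (x + τ • (y - x)) ∂ν) ^ q +
      (∫⁻ u in Set.Ioc (0 : ℝ) 1, M * (ENNReal.ofReal (u ^ d) *
        ∫⁻ y, h (x + (τ * u ^ (d + 1)) • (y - x)) ∂ν)) ^ q) := by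
        refine setLIntegral_mono' hBm fun x hx => ?_
        exact (ENNReal.rpow_le_rpow (hpt x hx) hq0).trans
          (ENNReal.rpow_add_le_mul_rpow_add_rpow _ _ hq1)
    _ ≤ ∫⁻ x, 2 ^ (q - 1) * ((∫⁻ y, G (x + τ • (y - x)) ∂ν) ^ q +
      (∫⁻ u in Set.Ioc (0 : ℝ) 1, M * (ENNReal.ofReal (u ^ d) *
        ∫⁻ y, h (x + (τ * u ^ (d + 1)) • (y - x)) ∂ν)) ^ q) := setLIntegral_le_lintegral _ _
    _ = 2 ^ (q - 1) * ((∫⁻ x, (∫⁻ y, G (x + τ • (y - x)) ∂ν) ^ q) +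
      ∫⁻ x, (∫⁻ u in Set.Ioc (0 : ℝ) 1, M * (ENNReal.ofReal (u ^ d) *
        ∫⁻ y, h (x + (τ * u ^ (d + 1)) • (y - x)) ∂ν)) ^ q) := by
        rw [lintegral_const_mul' _ _ (by finiteness), lintegral_add_left (by fun_prop)]
    _ ≤ _ := by gcongr

/-- real arithmetic at the end -/
lemma lu_real (d : ℕ) (hd : 1 ≤ d) (v r V N D P τ : ℝ) (hv : 0 < v) (hr : 0 < r)
    (hV : V = r ^ d * v) (hN : 0 < N) (hD : 0 ≤ D)
    (hτ : τ = √(N / (D + 4 * N / r ^ 2)) / r)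
    (h : P ≤ 2 ^ (2 * (1 + 2 / (d : ℝ)) - 1) *
      ((V⁻¹ * (τ ^ d)⁻¹ * N) ^ (2 / (d : ℝ)) * (2 ^ d * N) +
      (2 * r * (d + 1) * τ) ^ (2 * (1 + 2 / (d : ℝ))) *
      ((V⁻¹ * (τ ^ d)⁻¹ * D) ^ (2 / (d : ℝ)) * (2 ^ d * D)))) :
    P ≤ (2 ^ (2 * (1 + 2 / (d : ℝ)) - 1) * 2 ^ d * v ^ (-(2 / (d : ℝ))) *
      (1 + (2 * (d + 1)) ^ (2 * (1 + 2 / (d : ℝ))))) * (N ^ (2 / (d : ℝ)) *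
      (D + 4 * (V ^ (-(2 / (d : ℝ))) * v ^ (2 / (d : ℝ))) * N)) := by
  have hd0 : (0 : ℝ) < d := by exact_mod_cast hd
  set p : ℝ := 2 / (d : ℝ) with hp
  have hp0 : 0 < p := by positivity
  set E := D + 4 * N / r ^ 2 with hE
  have hE0 : 0 < E := by positivity
  set s := √(N / E) with hs
  have hs0 : 0 < s := Real.sqrt_pos.2 (by positivity)
  have hs2 : s ^ 2 = N / E := Real.sq_sqrt (by positivity)
  have key : ∀ t : ℝ, 0 < t → (t ^ d) ^ p = t ^ 2 := by
    intro t ht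
    rw [← Real.rpow_natCast, ← Real.rpow_mul ht.le, hp, mul_div_cancel₀ _ hd0.ne']
    norm_num
  have hτs : r * τ = s := by rw [hτ]; field_simp
  have hτ0 : 0 < τ := by rw [hτ]; positivity
  have hVp : V ^ (-p) * v ^ p = (r ^ 2)⁻¹ := by
    rw [hV, Real.rpow_neg (by positivity), Real.mul_rpow (by positivity) hv.le, key r hr]
    have : v ^ p ≠ 0 := by positivity
    field_simp
  have hE' : D + 4 * (V ^ (-p) * v ^ p) * N = E := by rw [hVp, hE]; field_simp
  have hbase : V⁻¹ * (τ ^ d)⁻¹ = (s ^ d)⁻¹ * v⁻¹ := by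
    rw [hV, ← hτs, mul_pow, mul_inv, mul_inv]; ring
  have hfac : ∀ X : ℝ, 0 ≤ X → (V⁻¹ * (τ ^ d)⁻¹ * X) ^ p = E / N * v ^ (-p) * X ^ p := by
    intro X hX
    rw [hbase, Real.mul_rpow (by positivity) hX, Real.mul_rpow (by positivity) (by positivity),
      Real.inv_rpow (by positivity), key s hs0, hs2, inv_div, Real.inv_rpow hv.le,
      Real.rpow_neg hv.le]
  have hM : (2 * r * (d + 1) * τ) ^ (2 * (1 + p)) =
      (2 * (d + 1)) ^ (2 * (1 + p)) * ((N / E) * (N ^ p / E ^ p)) := by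
    have : 2 * r * (d + 1) * τ = (2 * (d + 1)) * s := by rw [← hτs]; ring
    rw [this, Real.mul_rpow (by positivity) hs0.le, Real.rpow_mul hs0.le]
    have : s ^ (2 : ℝ) = N / E := by rw [← hs2]; norm_num
    rw [this, Real.rpow_add (by positivity), Real.rpow_one, Real.div_rpow hN.le hE0.le]
  rw [hfac N hN.le, hfac D hD, hM] at h
  rw [hE']
  refine h.trans ?_
  have hDE : D ≤ E := by rw [hE]; have : 0 < 4 * N / r ^ 2 := by positivity
                         linarith
  have hDp : D ^ p * D ≤ E ^ p * E := by gcongr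
  have hNp : 0 < N ^ p := by positivity
  have hEp : 0 < E ^ p := by positivity
  have hlast : N ^ p / E ^ p * (D ^ p * D) ≤ N ^ p * E := by
    rw [div_mul_eq_mul_div, div_le_iff₀ hEp]
    nlinarith
  have hvp : 0 < v ^ (-p) := by positivity
  set A : ℝ := (2 * (d + 1 : ℝ)) ^ (2 * (1 + p))
  have hA : 0 < A := by positivity
  calc _ = 2 ^ (2 * (1 + p) - 1) * 2 ^ d * v ^ (-p) *
        (N ^ p * E + A * (N ^ p / E ^ p * (D ^ p * D))) := by
        field_simp
    _ ≤ 2 ^ (2 * (1 + p) - 1) * 2 ^ d * v ^ (-p) * (N ^ p * E + A * (N ^ p * E)) := by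
        gcongr
    _ = _ := by ring

lemma lu_grad {d : ℕ} (g : EuclideanSpace ℝ (Fin d) → ℂ) (x : EuclideanSpace ℝ (Fin d)) :
    ‖fderiv ℝ g x‖ ^ 2 ≤ gradSq g x := by
  have h0 : 0 ≤ gradSq g x := Finset.sum_nonneg fun i _ => by positivity
  have : ‖fderiv ℝ g x‖ ≤ √(gradSq g x) := by
    refine ContinuousLinearMap.opNorm_le_bound _ (Real.sqrt_nonneg _) fun v => ?_
    have hv : v = ∑ i, v i • EuclideanSpace.single i (1 : ℝ) := by
      ext j
      simp [Finset.sum_apply, Pi.single_apply]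
    have hn : ‖v‖ = √(∑ i, ‖v i‖ ^ 2) := EuclideanSpace.norm_eq v
    calc ‖fderiv ℝ g x v‖ = ‖∑ i, v i • fderiv ℝ g x (EuclideanSpace.single i (1 : ℝ))‖ := by
          conv_lhs => rw [hv]
          rw [map_sum]; simp only [map_smul]
      _ ≤ ∑ i, ‖fderiv ℝ g x (EuclideanSpace.single i (1 : ℝ))‖ * ‖v i‖ := by
          refine (norm_sum_le _ _).trans (Finset.sum_le_sum fun i _ => ?_)
          rw [norm_smul, mul_comm]
      _ ≤ _ := by
          rw [hn]
          exact Real.sum_mul_le_sqrt_mul_sqrt _ _ _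
  calc _ ≤ √(gradSq g x) ^ 2 := by gcongr
    _ = _ := Real.sq_sqrt h0

lemma lu_lint {d : ℕ} (c : EuclideanSpace ℝ (Fin d)) (r : ℝ)
    {F : Type*} [NormedAddCommGroup F] (f : EuclideanSpace ℝ (Fin d) → F) (hf : Continuous f)
    (p : ℝ) (hp : 0 ≤ p) :
    ∫⁻ x in Metric.ball c r, ‖f x‖ₑ ^ p = ENNReal.ofReal (∫ x in Metric.ball c r, ‖f x‖ ^ p) := by
  have hc : Continuous fun x => ‖f x‖ ^ p := hf.norm.rpow_const fun _ => Or.inr hp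
  have hint : IntegrableOn (fun x => ‖f x‖ ^ p) (Metric.ball c r) :=
    (hc.continuousOn.integrableOn_compact (isCompact_closedBall c r)).mono_set
      Metric.ball_subset_closedBall
  rw [ofReal_integral_eq_lintegral_ofReal hint (Filter.Eventually.of_forall fun x => by positivity)]
  congr 1 with x
  rw [← ofReal_norm, ENNReal.ofReal_rpow_of_nonneg (norm_nonneg _) hp]

/-- **Local uncertainty principle**: for every open ball `B ⊂ ℝ^d` and `C¹` function `g`
with `∫_B |g|² > 0`,
`∫_B |∇g|² ≥ (1/C_d) (∫_B |g|^{2(1+2/d)}) / (∫_B |g|²)^{2/d} − C_d |B|^{−2/d} ∫_B |g|²`. -/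
theorem local_uncertainty (d : ℕ) (hd : 1 ≤ d) :
    ∃ C : ℝ, 0 < C ∧
      ∀ (c : EuclideanSpace ℝ (Fin d)) (r : ℝ), 0 < r →
      ∀ g : EuclideanSpace ℝ (Fin d) → ℂ, ContDiff ℝ 1 g →
        0 < (∫ x in Metric.ball c r, ‖g x‖ ^ 2) →
        ∫ x in Metric.ball c r, gradSq g x
          ≥ (1 / C) * (∫ x in Metric.ball c r, ‖g x‖ ^ (2 * (1 + 2 / (d : ℝ)))) /
              (∫ x in Metric.ball c r, ‖g x‖ ^ 2) ^ (2 / (d : ℝ))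
            - C * (volume (Metric.ball c r)).toReal ^ (-(2 / (d : ℝ))) *
              ∫ x in Metric.ball c r, ‖g x‖ ^ 2 := by
  have hd0 : (0 : ℝ) < d := by exact_mod_cast hd
  set p : ℝ := 2 / (d : ℝ) with hp
  have hp0 : 0 < p := by positivity
  set v : ℝ := (volume (Metric.ball (0 : EuclideanSpace ℝ (Fin d)) 1)).toReal with hv
  have hv0 : 0 < v := ENNReal.toReal_pos (Metric.measure_ball_pos volume _ one_pos).ne'
    measure_ball_lt_top.ne
  set K : ℝ := 2 ^ (2 * (1 + p) - 1) * 2 ^ d * v ^ (-p) *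
      (1 + (2 * (d + 1)) ^ (2 * (1 + p))) with hK
  have hK0 : 0 < K := by positivity
  refine ⟨K + 4 * v ^ p, by positivity, ?_⟩
  intro c r hr g hg hNpos
  have hgc : Continuous g := hg.continuous
  have hfc : Continuous (fderiv ℝ g) := hg.continuous_fderiv (by norm_num)
  set N : ℝ := ∫ x in Metric.ball c r, ‖g x‖ ^ 2 with hN
  set P : ℝ := ∫ x in Metric.ball c r, ‖g x‖ ^ (2 * (1 + p)) with hP
  set V : ℝ := (volume (Metric.ball c r)).toReal with hVdef
  set D : ℝ := ∫ x in Metric.ball c r, ‖fderiv ℝ g x‖ ^ 2 with hD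
  have hD0 : 0 ≤ D := integral_nonneg fun x => by positivity
  have hP0 : 0 ≤ P := integral_nonneg fun x => by positivity
  have hV : V = r ^ d * v := by
    rw [hVdef, hv, Measure.addHaar_ball_of_pos volume c hr, ENNReal.toReal_mul,
      ENNReal.toReal_ofReal (by positivity)]
    simp
  have hV0 : 0 < V := by rw [hV]; positivity
  have hDG : D ≤ ∫ x in Metric.ball c r, gradSq g x := by
    have hi : ∀ f : EuclideanSpace ℝ (Fin d) → ℝ, Continuous f →
        IntegrableOn f (Metric.ball c r) := fun f hf =>
      (hf.continuousOn.integrableOn_compact (isCompact_closedBall c r)).mono_set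
        Metric.ball_subset_closedBall
    refine integral_mono (hi _ (by fun_prop)) (hi _ ?_) fun x => lu_grad g x
    unfold gradSq
    fun_prop
  set τ : ℝ := √(N / (D + 4 * N / r ^ 2)) / r with hτ
  have hτ0 : 0 < τ := by positivity
  have hτ2 : τ ≤ 1 / 2 := by
    rw [hτ, div_le_iff₀ hr]
    apply Real.sqrt_le_iff.2 ⟨by positivity, ?_⟩
    rw [div_le_iff₀ (by positivity)]
    have : (1 / 2 * r) ^ 2 * (D + 4 * N / r ^ 2) = (1 / 2 * r) ^ 2 * D + N := by
      field_simp; ring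
    rw [this]
    have : 0 ≤ (1 / 2 * r) ^ 2 * D := by positivity
    linarith
  have hNl : ENNReal.ofReal N = ∫⁻ x in Metric.ball c r, ‖g x‖ₑ ^ (2 : ℝ) := by
    rw [lu_lint c r g hgc 2 (by norm_num), hN]; norm_num
  have hDl : ENNReal.ofReal D = ∫⁻ x in Metric.ball c r, ‖fderiv ℝ g x‖ₑ ^ (2 : ℝ) := by
    rw [lu_lint c r _ hfc 2 (by norm_num), hD]; norm_num
  have hκ : ENNReal.ofReal V⁻¹ = (volume (Metric.ball c r))⁻¹ := by
    rw [ENNReal.ofReal_inv_of_pos hV0, hVdef, ENNReal.ofReal_toReal measure_ball_lt_top.ne]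
  have hmain := lu_main hd c r hr g hg τ hτ0 hτ2 _ _ _ hκ hNl hDl
  rw [lu_lint c r g hgc _ (by positivity)] at hmain
  have hcv : ∀ X : ℝ, 0 ≤ X → (ENNReal.ofReal V⁻¹ * ENNReal.ofReal (τ ^ d)⁻¹ * ENNReal.ofReal X) ^
      (2 / (d : ℝ)) * (ENNReal.ofReal (2 ^ d) * ENNReal.ofReal X) =
      ENNReal.ofReal ((V⁻¹ * (τ ^ d)⁻¹ * X) ^ (2 / (d : ℝ)) * (2 ^ d * X)) := by
    intro X hX
    rw [← ENNReal.ofReal_mul (by positivity), ← ENNReal.ofReal_mul (by positivity),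
      ← ENNReal.ofReal_mul (by positivity), ENNReal.ofReal_rpow_of_nonneg (by positivity)
      (by positivity), ← ENNReal.ofReal_mul (by positivity)]
  have h2 : (2 : ℝ≥0∞) ^ (2 * (1 + 2 / (d : ℝ)) - 1) =
      ENNReal.ofReal (2 ^ (2 * (1 + 2 / (d : ℝ)) - 1)) := by
    rw [← ENNReal.ofReal_rpow_of_pos two_pos]; norm_num
  rw [hcv N hNpos.le, hcv D hD0, h2, ENNReal.ofReal_rpow_of_nonneg (by positivity) (by positivity),
    ← ENNReal.ofReal_mul (by positivity), ← ENNReal.ofReal_add (by positivity) (by positivity),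
    ← ENNReal.ofReal_mul (by positivity), ENNReal.ofReal_le_ofReal_iff (by positivity)] at hmain
  have hfin := lu_real d hd v r V N D P τ hv0 hr hV hNpos hD0 hτ hmain
  rw [← hp, ← hK] at hfin
  have hNp : 0 < N ^ p := by positivity
  have hvp : 0 < v ^ p := by positivity
  have hVp : 0 < V ^ (-p) := by positivity
  have h1 : 1 / (K + 4 * v ^ p) * P / N ^ p ≤ D + 4 * (V ^ (-p) * v ^ p) * N := by
    rw [div_le_iff₀ hNp, one_div, inv_mul_le_iff₀ (by positivity)]
    refine hfin.trans ?_
    rw [mul_comm (N ^ p)]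
    gcongr
    linarith
  have h3 : 0 ≤ K * V ^ (-p) * N := by positivity
  have h4 : (K + 4 * v ^ p) * V ^ (-p) * N = K * V ^ (-p) * N + 4 * (V ^ (-p) * v ^ p) * N := by
    ring
  rw [h4]
  linarith
end
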